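/- arXiv:1810.11853 — 5 statements merged into one kernel-verified Lean document; each statement's English description precedes it below -/
import Mathlib

section
/- Let p be a prime. Let B̃ be a commutative ring in which p is a non-zero-divisor and which is p-adically complete and separated. Set B := B̃/pB̃, and suppose x̃_1, …, x̃_m ∈ B̃ are elements whose images in B form a p-basis of B. Let D_1, …, D_m : B̃ → B̃ be derivations with D_i(x̃_j) = δ_{ij}. Then the image of ⋂_{i=1}^m Ker(D_i) under the reduction map B̃ → B equals the ring of constants k := ⋂_{n≥1} B^{p^n}, where B^{p^n} := {b^{p^n} : b ∈ B}. -/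
/-!
Write `A` for the `p`-adically complete ring, `B = A / p` and `d i` for the derivation of `B`
induced by `D i`.

*Constants lift.* Uniqueness in the definition of a `p`-basis makes the Frobenius of `B` injective.
Hence if `b = c n ^ p ^ n` for all `n`, then `c (n + 1) ^ p = c n`, and for arbitrary lifts `e n` of
`c n` the sequence `e n ^ p ^ n` converges `p`-adically to a (Teichmüller) lift `L` of `b`. Since
`D i L` is congruent modulo `p ^ n` to `D i (e n ^ p ^ n)`, which is divisible by `p ^ n`, separatedness
gives `D i L = 0`.

*Horizontal elements reduce to constants.* By induction on `n`, if all `D i f` are divisible by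
`p ^ n` then `f = ∑ j ≤ n, p ^ j * g j ^ p ^ (n - j)` is a ghost component
(`exists_ghost_of_dvd`), so that `f` reduces to `g 0 ^ p ^ n`. In the inductive step
`p ^ (n + 1) ∣ D i f` says that `∑ j ≤ n, g j ^ (p ^ (n - j) - 1) * d i (g j) = 0` in `B`. The identity
`d ^ (p - 1) (g ^ (p - 1) * d g) = - (d g) ^ p` (`cartier_identity`), which expresses that the
Cartier operator is inverse to `dg ↦ g ^ (p - 1) dg`, together with `d ^ p = 0`, peels off the terms
one at a time and yields `d i (g j) = 0` for all `i, j` (`eq_zero_of_sum_pow_mul_eq_zero`). Elements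
of `B` killed by all `d i` are `p`-th powers (`exists_pow_eq_of_forall_eq_zero`), and replacing each
`g j` by `h j ^ p` changes `f` only by a multiple of `p ^ (n + 1)`.
-/

/-! ### Derivations in characteristic `p` and the Cartier identity -/

section CharP

variable {B : Type*} [CommRing B]

lemma iterate_const_mul (d : Derivation ℤ B B) {c : B} (hc : d c = 0) (n : ℕ) (b : B) :
    d^[n] (c * b) = c * d^[n] b := by
  induction n generalizing b with
  | zero => rfl
  | succ n ih =>
    rw [Function.iterate_succ_apply, Function.iterate_succ_apply, ← ih]
    simp [hc]

lemma iterate_add' (d : Derivation ℤ B B) (n : ℕ) (a b : B) :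
    d^[n] (a + b) = d^[n] a + d^[n] b := iterate_map_add d n a b

lemma iterate_sum' {κ : Type*} (d : Derivation ℤ B B) (n : ℕ) (t : Finset κ) (f : κ → B) :
    d^[n] (∑ i ∈ t, f i) = ∑ i ∈ t, d^[n] (f i) := by
  induction t using Finset.cons_induction with
  | empty => simp [iterate_map_zero]
  | cons a t ha ih => rw [Finset.sum_cons, Finset.sum_cons, iterate_add', ih]

lemma iterate_pow_coord (d : Derivation ℤ B B) {x : B} (hx : d x = 1) (n k : ℕ) :
    d^[n] (x ^ k) = (k.descFactorial n : B) * x ^ (k - n) := by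
  induction n with
  | zero => simp
  | succ n ih =>
    rw [Function.iterate_succ_apply', ih, Nat.descFactorial_succ, Nat.sub_succ']
    simp [hx]
    ring

lemma derivation_pow_p (p : ℕ) [CharP B p] (d : Derivation ℤ B B) (a : B) : d (a ^ p) = 0 := by
  simp [Derivation.leibniz_pow]

variable (p : ℕ) [Fact p.Prime] [CharP B p]

/-- `d ^ p = 0` when `B` is spanned over the constants of `d` by the powers `x ^ k`, `k < p`, of a
coordinate `x`. -/
lemma iterate_p_eq_zero {ι : Type*} [Fintype ι] (d : Derivation ℤ B B) {x : B} (hx : d x = 1)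
    (e : ι → ℕ) (he : ∀ α, e α < p)
    (H : ∀ b, ∃ c : ι → B, (∀ α, d (c α) = 0) ∧ b = ∑ α, c α * x ^ e α) (b : B) :
    d^[p] b = 0 := by
  obtain ⟨c, hc, rfl⟩ := H b
  rw [iterate_sum']
  refine Finset.sum_eq_zero fun α _ => ?_
  rw [iterate_const_mul d (hc α), iterate_pow_coord d hx,
    Nat.descFactorial_of_lt (he α)]
  simp

/-- The Cartier identity for one monomial. -/
lemma cartier_monomial (d : Derivation ℤ B B) {x : B} (hx : d x = 1) {c : B} (hc : d c = 0)
    (k : ℕ) :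
    d^[p - 1] ((c * x ^ k) ^ (p - 1) * d (c * x ^ k)) = -(d (c * x ^ k)) ^ p := by
  have hp : p.Prime := Fact.out
  have hd : d (c * x ^ k) = c * (k * x ^ (k - 1)) := by
    simp [hc, hx]
  rw [hd]
  rcases k with _ | k
  · simp [hp.ne_zero, iterate_map_zero]
  obtain ⟨q, hq⟩ : ∃ q, p = q + 1 := ⟨p - 1, by have := hp.pos; omega⟩
  have hfac : ((q.factorial : ℕ) : B) = -1 := by
    have h := congrArg (ZMod.castHom (dvd_refl p) B) (ZMod.wilsons_lemma p)
    simpa [hq] using h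
  have hk : ((k + 1 : ℕ) : B) ^ p = ((k + 1 : ℕ) : B) := by
    have h := congrArg (ZMod.castHom (dvd_refl p) B) (ZMod.pow_card ((k + 1 : ℕ) : ZMod p))
    simpa only [map_pow, map_natCast] using h
  have hconst : d (((k + 1 : ℕ) : B) * (c * x ^ k) ^ p) = 0 := by
    rw [Derivation.leibniz, derivation_pow_p p d]; simp
  -- The constant `(k + 1) * (c * x ^ k) ^ p` is split off, leaving `x ^ (p - 1)`.
  have e1 : (c * x ^ (k + 1)) ^ (p - 1) * (c * (((k + 1 : ℕ) : B) * x ^ (k + 1 - 1)))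
      = (((k + 1 : ℕ) : B) * (c * x ^ k) ^ p) * x ^ q := by
    rw [hq]; simp only [Nat.add_sub_cancel]; ring
  rw [e1, iterate_const_mul d hconst, iterate_pow_coord d hx]
  have : p - 1 = q := by omega
  rw [this, Nat.descFactorial_self, hfac, mul_pow, mul_pow c, mul_pow _ _ p, hk, Nat.sub_self,
    Nat.add_sub_cancel]
  ring

/-- The Cartier operator is inverse to `dg ↦ g ^ (p - 1) dg`. Both sides are additive in `g`:
by `hadd`, the left-hand side is so up to `d ^ p = 0`. This reduces the identity to monomials. -/
lemma cartier_identity {ι : Type*} [Fintype ι] (d : Derivation ℤ B B) {x : B} (hx : d x = 1)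
    (e : ι → ℕ) (he : ∀ α, e α < p)
    (H : ∀ b, ∃ c : ι → B, (∀ α, d (c α) = 0) ∧ b = ∑ α, c α * x ^ e α)
    (hadd : ∀ g h : B, ∃ s, (g + h) ^ (p - 1) * d (g + h) =
      g ^ (p - 1) * d g + h ^ (p - 1) * d h + d s) (g : B) :
    d^[p - 1] (g ^ (p - 1) * d g) = -(d g) ^ p := by
  have hp : p.Prime := Fact.out
  obtain ⟨c, hc, rfl⟩ := H g
  induction (Finset.univ : Finset ι) using Finset.cons_induction with
  | empty => simp [hp.ne_zero, iterate_map_zero]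
  | cons a t ha ih =>
    rw [Finset.sum_cons]
    obtain ⟨s, hs⟩ := hadd (c a * x ^ e a) (∑ α ∈ t, c α * x ^ e α)
    have h0 : d^[p - 1] (d s) = 0 := by
      rw [← Function.iterate_succ_apply, Nat.succ_eq_add_one, Nat.sub_add_cancel hp.one_le]
      exact iterate_p_eq_zero p d hx e he H s
    rw [hs, iterate_add', iterate_add', h0, ih, cartier_monomial p d hx (hc a), map_add,
      add_pow_char]
    ring

/-- The sum is the coefficient of `C^{-n} dg₀ + ⋯ + C^{-1} dg_{n-1} + dg_n`, where `C` is the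
Cartier operator; each application of `C` removes the last term. -/
lemma eq_zero_of_sum_pow_mul_eq_zero (d : Derivation ℤ B B)
    (hred : ∀ b : B, b ^ p = 0 → b = 0) (hdp : ∀ b, d^[p] b = 0)
    (hcart : ∀ g : B, d^[p - 1] (g ^ (p - 1) * d g) = -(d g) ^ p) (g : ℕ → B) (n : ℕ)
    (h : ∑ j ∈ Finset.range (n + 1), g j ^ (p ^ (n - j) - 1) * d (g j) = 0) :
    ∀ j ≤ n, d (g j) = 0 := by
  have hp : p.Prime := Fact.out
  induction n with
  | zero => intro j hj; obtain rfl : j = 0 := by omega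
            simpa using h
  | succ n ih =>
    have hterm : ∀ j ∈ Finset.range (n + 1),
        d^[p - 1] (g j ^ (p ^ (n + 1 - j) - 1) * d (g j)) =
          -(g j ^ (p ^ (n - j) - 1) * d (g j)) ^ p := by
      intro j hj
      have hj' : j < n + 1 := Finset.mem_range.1 hj
      have e1 : p ^ (n + 1 - j) - 1 = (p ^ (n - j) - 1) * p + (p - 1) := by
        have h1 : n + 1 - j = (n - j) + 1 := by omega
        have h2 : 0 < p ^ (n - j) := pow_pos hp.pos _
        obtain ⟨q, hq⟩ : ∃ q, p ^ (n - j) = q + 1 := ⟨p ^ (n - j) - 1, by omega⟩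
        have := hp.pos
        rw [h1, pow_succ, hq, Nat.add_sub_cancel, add_mul, one_mul]
        omega
      rw [e1, pow_add, pow_mul, mul_assoc, iterate_const_mul d (derivation_pow_p p d _), hcart]
      ring
    have hsum : ∑ j ∈ Finset.range (n + 1), g j ^ (p ^ (n - j) - 1) * d (g j) = 0 := by
      apply hred
      rw [sum_pow_char]
      have h1 := congrArg (d^[p - 1]) h
      rw [Finset.sum_range_succ, iterate_add', iterate_map_zero] at h1
      have h2 : d^[p - 1] (g (n + 1) ^ (p ^ (n + 1 - (n + 1)) - 1) * d (g (n + 1))) = 0 := by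
        simp only [Nat.sub_self, pow_zero, one_mul]
        rw [← Function.iterate_succ_apply, Nat.succ_eq_add_one, Nat.sub_add_cancel hp.one_le]
        exact hdp _
      rw [h2, add_zero, iterate_sum', Finset.sum_congr rfl hterm, Finset.sum_neg_distrib, neg_eq_zero] at h1
      exact h1
    have hle := ih hsum
    intro j hj
    rcases Nat.lt_or_ge j (n + 1) with hlt | hge
    · exact hle j (by omega)
    · obtain rfl : j = n + 1 := by omega
      rw [Finset.sum_range_succ, Finset.sum_eq_zero] at h
      · simpa using h
      · intro i hi
        rw [hle i (by have := Finset.mem_range.1 hi; omega), mul_zero]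

end CharP

/-! ### `p`-bases and their coordinate derivations -/

section PBasis

variable {B : Type*} [CommRing B] (p : ℕ) {m : ℕ} (x : Fin m → B)

/-- The elements `x j` form a `p`-basis of `B`. -/
def IsPBasis : Prop :=
  ∀ b : B, ∃! f : (Fin m → Fin p) → B, b = ∑ α : Fin m → Fin p, (f α) ^ p * ∏ j, x j ^ (α j : ℕ)

variable {p x} [Fact p.Prime]

lemma IsPBasis.eq_zero_of_sum (h : IsPBasis p x) {f : (Fin m → Fin p) → B}
    (hf : ∑ α : Fin m → Fin p, (f α) ^ p * ∏ j, x j ^ (α j : ℕ) = 0) : f = 0 := by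
  have hp : p.Prime := Fact.out
  refine (h 0).unique hf.symm ?_
  simp [hp.ne_zero]

/-- The Frobenius is injective: `b ^ p` has the expansion with the single coefficient `b`. -/
lemma IsPBasis.eq_zero_of_pow (h : IsPBasis p x) (b : B) (hb : b ^ p = 0) : b = 0 := by
  have hp : p.Prime := Fact.out
  have : (fun _ => b : (Fin m → Fin p) → B) = 0 := h.eq_zero_of_sum (by simp [hb])
  exact congrFun this (fun _ => ⟨0, hp.pos⟩)

variable [CharP B p]

/-- Each monomial is an eigenvector of the Euler operator `x i * d`. -/
lemma mul_derivation_monomial (d : Derivation ℤ B B) (i : Fin m)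
    (hd : ∀ j, d (x j) = if i = j then 1 else 0) (α : Fin m → ℕ) :
    x i * d (∏ j, x j ^ α j) = α i * ∏ j, x j ^ α j := by
  have hy : d (∏ j ∈ Finset.univ.erase i, x j ^ α j) = 0 := by
    refine Finset.prod_induction _ (fun b => d b = 0) (fun a b ha hb => by simp [ha, hb])
      (by simp) fun j hj => ?_
    have : i ≠ j := (Finset.ne_of_mem_erase hj).symm
    simp [Derivation.leibniz_pow, hd, this]
  rw [← Finset.mul_prod_erase Finset.univ _ (Finset.mem_univ i)]
  rw [Derivation.leibniz, hy, Derivation.leibniz_pow, hd]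
  rcases hα : α i with _ | k
  · simp
  · simp; ring

/-- Over the constants of `d`, the ring is spanned by the powers `x i ^ k` with `k < p`. -/
lemma IsPBasis.expand (h : IsPBasis p x) (d : Derivation ℤ B B) (i : Fin m)
    (hd : ∀ j, d (x j) = if i = j then 1 else 0) (b : B) :
    ∃ c : (Fin m → Fin p) → B, (∀ α, d (c α) = 0) ∧ b = ∑ α, c α * x i ^ (α i : ℕ) := by
  obtain ⟨f, hf, -⟩ := h b
  refine ⟨fun α => f α ^ p * ∏ j ∈ Finset.univ.erase i, x j ^ (α j : ℕ), fun α => ?_, ?_⟩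
  · have hy : d (∏ j ∈ Finset.univ.erase i, x j ^ (α j : ℕ)) = 0 := by
      refine Finset.prod_induction _ (fun b => d b = 0) (fun a b ha hb => by simp [ha, hb])
        (by simp) fun j hj => ?_
      have : i ≠ j := (Finset.ne_of_mem_erase hj).symm
      simp [Derivation.leibniz_pow, hd, this]
    rw [Derivation.leibniz, hy, derivation_pow_p p d]; simp
  · refine hf.trans (Finset.sum_congr rfl fun α _ => ?_)
    rw [← Finset.mul_prod_erase Finset.univ _ (Finset.mem_univ i)]
    ring

/-- The common kernel of the coordinate derivations consists of `p`-th powers: applying `x i * d i`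
multiplies the coefficient of `x ^ α` by `α i`. -/
lemma exists_pow_eq_of_forall_eq_zero (h : IsPBasis p x) (d : Fin m → Derivation ℤ B B)
    (hd : ∀ i j, d i (x j) = if i = j then 1 else 0) (b : B) (hb : ∀ i, d i b = 0) :
    ∃ a, a ^ p = b := by
  have hp : p.Prime := Fact.out
  obtain ⟨f, hf, -⟩ := h b
  have key : ∀ (i : Fin m) (α : Fin m → Fin p), ((α i : ℕ) : B) * f α = 0 := by
    intro i
    refine congrFun (h.eq_zero_of_sum (f := fun α => ((α i : ℕ) : B) * f α) ?_)
    have h1 : x i * d i b = 0 := by rw [hb, mul_zero]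
    rw [hf, map_sum, Finset.mul_sum] at h1
    rw [← h1]
    refine Finset.sum_congr rfl fun α _ => ?_
    have hk : (((α i : ℕ) : ℕ) : B) ^ p = ((α i : ℕ) : B) := by
      have h := congrArg (ZMod.castHom (dvd_refl p) B) (ZMod.pow_card (((α i : ℕ) : ℕ) : ZMod p))
      simpa only [map_pow, map_natCast] using h
    have hm := mul_derivation_monomial (x := x) (d i) i (hd i) (fun j => (α j : ℕ))
    rw [mul_pow, hk, Derivation.leibniz, derivation_pow_p p (d i)]
    simp only [smul_eq_mul, mul_zero, add_zero]
    linear_combination (-(f α ^ p)) * hm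
  refine ⟨f (fun _ => ⟨0, hp.pos⟩), ?_⟩
  rw [hf, Finset.sum_eq_single (fun _ => ⟨0, hp.pos⟩)]
  · simp
  · intro α _ hα
    obtain ⟨i, hi⟩ : ∃ i, (α i : ℕ) ≠ 0 := by
      by_contra! hcon
      exact hα (funext fun i => Fin.ext (hcon i))
    have hu : IsUnit ((α i : ℕ) : B) := by
      have hz : ((α i : ℕ) : ZMod p) ≠ 0 := by
        rw [Ne, ZMod.natCast_eq_zero_iff]
        exact Nat.not_dvd_of_pos_of_lt (Nat.pos_of_ne_zero hi) (α i).2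
      have := (IsUnit.mk0 _ hz).map (ZMod.castHom (dvd_refl p) B)
      rwa [map_natCast] at this
    rw [hu.mul_right_eq_zero.1 (key i α)]
    simp [hp.ne_zero]
  · simp

end PBasis

/-! ### Lifting to the `p`-torsion-free ring -/

section Lift

variable {A B : Type*} [CommRing A] [CommRing B] {p : ℕ} {π : A →+* B}

/-- A derivation of `A` induces one of `B = A / p`, as it preserves the multiples of `p`. -/
lemma exists_reduction (hπ : Function.Surjective π) (hker : ∀ a, π a = 0 ↔ (p : A) ∣ a)
    (D : Derivation ℤ A A) : ∃ d : Derivation ℤ B B, ∀ a, d (π a) = π (D a) := by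
  have wd : ∀ a b, π a = π b → π (D a) = π (D b) := by
    intro a b hab
    rw [← sub_eq_zero, ← map_sub, hker] at hab
    obtain ⟨c, hc⟩ := hab
    rw [← sub_eq_zero, ← map_sub, ← map_sub, hc, hker]
    exact ⟨D c, by simp⟩
  let s := Function.surjInv hπ
  have hs : ∀ b, π (s b) = b := Function.surjInv_eq hπ
  have hF : ∀ a, π (D (s (π a))) = π (D a) := fun a => wd _ _ (hs _)
  let F : B →+ B := AddMonoidHom.mk' (fun b => π (D (s b))) (by
    intro a b
    rw [← map_add, ← map_add]
    exact wd _ _ (by simp [hs]))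
  refine ⟨Derivation.mk' F.toIntLinearMap ?_, fun a => hF a⟩
  intro a b
  change π (D (s (a * b))) = a • π (D (s b)) + b • π (D (s a))
  rw [wd (s (a * b)) (s a * s b) (by simp [hs])]
  simp [hs]

variable [Fact p.Prime]

/-- `g ↦ g ^ (p - 1) * d g` is additive up to exact terms, since `p * g ^ (p - 1) * D g = D (g ^ p)`
upstairs, where `p` can be cancelled. -/
lemma pow_mul_derivation_add (hreg : ∀ a : A, (p : A) * a = 0 → a = 0)
    (hπ : Function.Surjective π)
    (D : Derivation ℤ A A) (d : Derivation ℤ B B) (hd : ∀ a, d (π a) = π (D a)) (g h : B) :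
    ∃ s, (g + h) ^ (p - 1) * d (g + h) = g ^ (p - 1) * d g + h ^ (p - 1) * d h + d s := by
  have hp : p.Prime := Fact.out
  obtain ⟨g, rfl⟩ := hπ g
  obtain ⟨h, rfl⟩ := hπ h
  obtain ⟨s, hs⟩ := exists_add_pow_prime_eq hp g h
  refine ⟨π (g * h * s), ?_⟩
  have hD := congrArg D hs
  have key : (g + h) ^ (p - 1) * D (g + h) =
      g ^ (p - 1) * D g + h ^ (p - 1) * D h + D (g * h * s) := by
    rw [← sub_eq_zero]
    apply hreg
    rw [show (p : A) * g * h * s = (p : A) * (g * h * s) by ring, map_add, map_add,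
      Derivation.leibniz D (p : A), Derivation.leibniz_pow, Derivation.leibniz_pow,
      Derivation.leibniz_pow, Derivation.map_natCast] at hD
    simp only [smul_eq_mul, nsmul_eq_mul, mul_zero, add_zero] at hD
    linear_combination hD
  rw [← map_add, hd, hd, hd, hd]
  simpa only [map_mul, map_pow, map_add] using congrArg π key

variable [CharP B p] {m : ℕ} {x : Fin m → A}

/-- An element whose derivatives are divisible by `p ^ n` is the `n`-th ghost component of a Witt
vector. -/
lemma exists_ghost_of_dvd (hreg : ∀ a : A, (p : A) * a = 0 → a = 0)
    (hπ : Function.Surjective π) (hker : ∀ a, π a = 0 ↔ (p : A) ∣ a)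
    (hbasis : IsPBasis p (fun j => π (x j))) (D : Fin m → Derivation ℤ A A)
    (hD : ∀ i j, D i (x j) = if i = j then 1 else 0) (n : ℕ) (f : A)
    (hf : ∀ i, (p : A) ^ n ∣ D i f) :
    ∃ g : ℕ → A, f = ∑ j ∈ Finset.range (n + 1), (p : A) ^ j * g j ^ p ^ (n - j) := by
  have hp : p.Prime := Fact.out
  have hregn : ∀ (n : ℕ) (a : A), (p : A) ^ n * a = 0 → a = 0 := by
    intro n
    induction n with
    | zero => intro a ha; simpa using ha
    | succ n ih => intro a ha; exact ih a (hreg _ (by rw [← ha]; ring))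
  choose d hd using fun i => exists_reduction hπ hker (D i)
  have hdx : ∀ i j, d i (π (x j)) = if i = j then 1 else 0 := by
    intro i j
    rw [hd, hD]
    split_ifs <;> simp
  induction n with
  | zero => exact ⟨fun _ => f, by simp⟩
  | succ n ih =>
    obtain ⟨g, hg⟩ := ih fun i => (pow_dvd_pow _ n.le_succ).trans (hf i)
    have hDf : ∀ i, D i f =
        (p : A) ^ n * ∑ j ∈ Finset.range (n + 1), g j ^ (p ^ (n - j) - 1) * D i (g j) := by
      intro i
      rw [hg, map_sum, Finset.mul_sum]
      refine Finset.sum_congr rfl fun j hj => ?_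
      have hn : (p : A) ^ n = (p : A) ^ j * (p : A) ^ (n - j) := by
        rw [← pow_add]; congr 1; have := Finset.mem_range.1 hj; omega
      rw [Derivation.leibniz, Derivation.leibniz_pow, Derivation.leibniz_pow,
        Derivation.map_natCast, hn]
      simp only [smul_eq_mul, nsmul_eq_mul, mul_zero, smul_zero, add_zero, Nat.cast_pow]
      ring
    have hdg : ∀ i, ∀ j ≤ n, d i (π (g j)) = 0 := by
      intro i
      have hx1 : d i (π (x i)) = 1 := by simp [hdx]
      have hH := hbasis.expand (d i) i (hdx i)
      refine eq_zero_of_sum_pow_mul_eq_zero p (d i) hbasis.eq_zero_of_pow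
        (iterate_p_eq_zero p (d i) hx1 (fun α : Fin m → Fin p => (α i : ℕ)) (fun α => (α i).2) hH)
        (cartier_identity p (d i) hx1 (fun α : Fin m → Fin p => (α i : ℕ)) (fun α => (α i).2) hH
          (pow_mul_derivation_add hreg hπ (D i) (d i) (hd i))) (fun j => π (g j)) n ?_
      obtain ⟨c, hc⟩ := hf i
      have h1 : (p : A) ∣ ∑ j ∈ Finset.range (n + 1), g j ^ (p ^ (n - j) - 1) * D i (g j) := by
        refine ⟨c, ?_⟩
        rw [← sub_eq_zero]
        apply hregn n
        rw [hDf] at hc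
        linear_combination hc
      rw [← hker] at h1
      simpa [hd] using h1
    have hroot : ∀ j, ∃ h : A, j ≤ n → (p : A) ∣ g j - h ^ p := by
      intro j
      by_cases hj : j ≤ n
      · obtain ⟨a, ha⟩ := exists_pow_eq_of_forall_eq_zero hbasis d hdx (π (g j))
          fun i => hdg i j hj
        obtain ⟨h, rfl⟩ := hπ a
        exact ⟨h, fun _ => by rw [← hker, map_sub, map_pow, ha, sub_self]⟩
      · exact ⟨0, fun hj' => absurd hj' hj⟩
    choose h hh using hroot
    have hdiv : (p : A) ^ (n + 1) ∣
        f - ∑ j ∈ Finset.range (n + 1), (p : A) ^ j * h j ^ p ^ (n + 1 - j) := by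
      rw [hg, ← Finset.sum_sub_distrib]
      refine Finset.dvd_sum fun j hj => ?_
      have hj' : j ≤ n := by have := Finset.mem_range.1 hj; omega
      have h1 := dvd_sub_pow_of_dvd_sub (hh j hj') (n - j)
      rw [← mul_sub, show n + 1 = j + (n - j + 1) by omega, pow_add]
      refine mul_dvd_mul_left _ ?_
      rwa [show j + (n - j + 1) - j = (n - j) + 1 by omega, pow_succ' p, pow_mul]
    obtain ⟨r, hr⟩ := hdiv
    refine ⟨fun j => if j ≤ n then h j else r, ?_⟩
    rw [Finset.sum_range_succ]
    have e1 : ∑ j ∈ Finset.range (n + 1),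
        (p : A) ^ j * (if j ≤ n then h j else r) ^ p ^ (n + 1 - j) =
        ∑ j ∈ Finset.range (n + 1), (p : A) ^ j * h j ^ p ^ (n + 1 - j) := by
      refine Finset.sum_congr rfl fun j hj => ?_
      rw [if_pos (by have := Finset.mem_range.1 hj; omega)]
    rw [e1]
    simp only [Nat.sub_self, pow_zero, pow_one, Nat.not_succ_le_self, if_false]
    linear_combination hr

lemma exists_pow_eq_of_horizontal (hreg : ∀ a : A, (p : A) * a = 0 → a = 0)
    (hπ : Function.Surjective π) (hker : ∀ a, π a = 0 ↔ (p : A) ∣ a)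
    (hbasis : IsPBasis p (fun j => π (x j))) (D : Fin m → Derivation ℤ A A)
    (hD : ∀ i j, D i (x j) = if i = j then 1 else 0) (f : A) (hf : ∀ i, D i f = 0) (n : ℕ) :
    ∃ c, c ^ p ^ n = π f := by
  obtain ⟨g, hg⟩ := exists_ghost_of_dvd hreg hπ hker hbasis D hD n f (fun i => by simp [hf])
  refine ⟨π (g 0), ?_⟩
  rw [hg, Finset.sum_range_succ', map_add, map_sum, Finset.sum_eq_zero]
  · simp
  · intro j _
    simp [pow_succ]

/-- The Teichmüller lift of an element with compatible `p`-power roots is horizontal. -/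
lemma exists_horizontal_lift [IsAdicComplete (Ideal.span {(p : A)}) A]
    (hπ : Function.Surjective π) (hker : ∀ a, π a = 0 ↔ (p : A) ∣ a)
    (hred : ∀ b : B, b ^ p = 0 → b = 0) (D : Fin m → Derivation ℤ A A) (b : B)
    (hb : ∀ n, ∃ c, c ^ p ^ n = b) : ∃ f, (∀ i, D i f = 0) ∧ π f = b := by
  have hp : p.Prime := Fact.out
  have hmod : ∀ (n : ℕ) (a b : A),
      a ≡ b [SMOD (Ideal.span {(p : A)} ^ n • ⊤ : Submodule A A)] ↔ (p : A) ^ n ∣ a - b := by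
    intro n a b
    rw [SModEq.sub_mem, smul_eq_mul, Ideal.mul_top, Ideal.span_singleton_pow,
      Ideal.mem_span_singleton]
  have hb' : ∀ n, ∃ e : A, π e ^ p ^ n = b := fun n => by
    obtain ⟨c, hc⟩ := hb n
    obtain ⟨e, rfl⟩ := hπ c
    exact ⟨e, hc⟩
  choose e he using hb'
  have hredn : ∀ (n : ℕ) (b : B), b ^ p ^ n = 0 → b = 0 := by
    intro n
    induction n with
    | zero => intro b h; simpa using h
    | succ n ih => intro b h; exact ih b (hred _ (by rw [← pow_mul, ← pow_succ]; exact h))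
  have hroot : ∀ n, π (e (n + 1)) ^ p = π (e n) := by
    intro n
    rw [← sub_eq_zero]
    apply hredn n
    rw [sub_pow_char_pow, ← pow_mul, ← pow_succ', he, he, sub_self]
  have hstep : ∀ n, (p : A) ^ (n + 1) ∣ e n ^ p ^ n - e (n + 1) ^ p ^ (n + 1) := by
    intro n
    rw [pow_succ' p, pow_mul]
    apply dvd_sub_pow_of_dvd_sub
    rw [← hker, map_sub, map_pow, hroot, sub_self]
  have hcauchy : ∀ {k n : ℕ}, k ≤ n → (p : A) ^ k ∣ e k ^ p ^ k - e n ^ p ^ n := by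
    intro k n hkn
    induction n, hkn using Nat.le_induction with
    | base => simp
    | succ n hkn ih =>
      have := dvd_add ih ((pow_dvd_pow (p : A) (show k ≤ n + 1 by omega)).trans (hstep n))
      simpa using this
  obtain ⟨L, hL⟩ := IsPrecomplete.prec (I := Ideal.span {(p : A)}) (M := A) inferInstance
    (f := fun n => e n ^ p ^ n) (fun {k n} hkn => (hmod _ _ _).2 (hcauchy hkn))
  refine ⟨L, fun i => ?_, ?_⟩
  · refine IsHausdorff.haus (I := Ideal.span {(p : A)}) (M := A) inferInstance _ fun n => ?_
    rw [hmod, sub_zero]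
    obtain ⟨r, hr⟩ := (hmod _ _ _).1 (hL n)
    have hLr : L = e n ^ p ^ n - (p : A) ^ n * r := by linear_combination -hr
    rw [hLr, map_sub, Derivation.leibniz_pow, Derivation.leibniz, Derivation.leibniz_pow,
      Derivation.map_natCast]
    simp only [smul_eq_mul, nsmul_eq_mul, mul_zero, smul_zero, add_zero, Nat.cast_pow]
    exact dvd_sub (dvd_mul_right _ _) (dvd_mul_right _ _)
  · have h1 := (hmod _ _ _).1 (hL 1)
    rw [pow_one, ← hker, map_sub, map_pow, he, sub_eq_zero] at h1
    exact h1.symm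

end Lift

/-- Let `p` be a prime and `B̃` a commutative ring in which `p` is a non-zero-divisor and which
is `p`-adically complete and separated. Set `B := B̃/pB̃` and suppose `x̃ 0, …, x̃ (m-1) ∈ B̃` have
images in `B` forming a `p`-basis. Let `D 0, …, D (m-1)` be derivations of `B̃` with
`D i (x̃ j) = δ_{ij}`. Then the image of `⋂ i, Ker (D i)` under the reduction map `B̃ → B`
equals the ring of constants `k = ⋂_{n ≥ 1} B^{p^n}`. -/
theorem stmt_5 (p : ℕ) (hp : p.Prime) (B' : Type*) [CommRing B']
    (hreg : ∀ x : B', (p : B') * x = 0 → x = 0)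
    (hcomplete : IsAdicComplete (Ideal.span {(p : B')}) B')
    (m : ℕ) (x : Fin m → B')
    (hbasis : ∀ b : B' ⧸ Ideal.span {(p : B')},
      ∃! f : (Fin m → Fin p) → B' ⧸ Ideal.span {(p : B')},
        b = ∑ α : Fin m → Fin p, (f α) ^ p *
          ∏ j, (Ideal.Quotient.mk (Ideal.span {(p : B')}) (x j)) ^ (α j : ℕ))
    (D : Fin m → Derivation ℤ B' B')
    (hD : ∀ i j, D i (x j) = if i = j then 1 else 0) :
    (Ideal.Quotient.mk (Ideal.span {(p : B')})) '' {f : B' | ∀ i, D i f = 0} =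
      ⋂ (n : ℕ) (_ : 1 ≤ n),
        {b : B' ⧸ Ideal.span {(p : B')} | ∃ c, c ^ (p ^ n) = b} := by
  have : Fact p.Prime := ⟨hp⟩
  set π := Ideal.Quotient.mk (Ideal.span {(p : B')}) with hπdef
  have hπ : Function.Surjective π := Ideal.Quotient.mk_surjective
  have hker : ∀ a, π a = 0 ↔ (p : B') ∣ a := fun a => by
    rw [hπdef, Ideal.Quotient.eq_zero_iff_mem, Ideal.mem_span_singleton]
  rcases subsingleton_or_nontrivial (B' ⧸ Ideal.span {(p : B')}) with hs | hn
  -- `B = 0` is not excluded by the hypotheses, and then has no characteristic `p` structure.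
  · ext b
    refine iff_of_true ⟨0, by simp, Subsingleton.elim _ _⟩ ?_
    simp only [Set.mem_iInter]
    exact fun n _ => ⟨0, Subsingleton.elim _ _⟩
  have hp0 : ((p : ℕ) : B' ⧸ Ideal.span {(p : B')}) = 0 := by
    rw [← map_natCast π, hker]
  have : CharP (B' ⧸ Ideal.span {(p : B')}) p := (CharP.charP_iff_prime_eq_zero hp).2 hp0
  have hB : IsPBasis p (fun j => π (x j)) := hbasis
  ext b
  simp only [Set.mem_image, Set.mem_iInter, Set.mem_ofPred_eq]
  constructor
  · rintro ⟨f, hf, rfl⟩ n -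
    exact exists_pow_eq_of_horizontal hreg hπ hker hB D hD f hf n
  · intro hb
    refine exists_horizontal_lift hπ hker hB.eq_zero_of_pow D b fun n => ?_
    rcases n with _ | n
    · exact ⟨b, by simp⟩
    · exact hb (n + 1) (by omega)
end

section
/- Let p be a prime and φ : A → B a homomorphism of commutative rings such that: p is a non-zero-divisor in A and in B; A and B are p-adically complete and separated (the canonical maps A → lim_r A/p^r A and B → lim_r B/p^r B are bijective); and the induced homomorphism A/p^r A → B/p^r B is faithfully flat for every r ≥ 1. Let I_A be an ideal of A[1/p] and let I_B be the ideal of B[1/p] generated by the image of I_A. If I_B is generated by an idempotent element of B[1/p], then I_A is generated by an idempotent element of A[1/p]. -/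
/-!
Let `K ⊆ A` be the contraction of `I_A`; it is saturated with respect to `p`. Since `e = e²`
lies in `I_B ^ 2`, some `p ^ N • e` lies in `J B` for a finitely generated ideal `J ≤ K ^ 2`.
If `x ∈ K`, then `φ x = e φ x` in `B[1/p]`, so `φ (p ^ N x)` lies in `J B`; faithful flatness
modulo `p ^ (N + 1)` gives `p ^ N x ∈ J + p ^ (N + 1) A`, and by saturation
`p ^ N K ≤ J + p (p ^ N K)`. The `p`-adic form of Nakayama's lemma (`le_of_le_sup_mul`), which
needs only `J`, and not `p ^ N K`, to be finitely generated, yields `p ^ N K ≤ J ≤ K ^ 2`.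
After inverting `p`, the ideal `I_A` is the extension of `J`, hence finitely generated, and
`I_A = I_A ^ 2`, so it is generated by an idempotent. The homomorphism `A[1/p] → B[1/p]`
need not be flat, so the descent has to go through the quotients modulo powers of `p`.
-/

lemma spanPow_le_comap {A B : Type*} [CommRing A] [CommRing B] (φ : A →+* B) (p r : ℕ) :
    Ideal.span {(p : A) ^ r} ≤ (Ideal.span {(p : B) ^ r}).comap φ := by
  rw [Ideal.span_le, Set.singleton_subset_iff]
  have h : φ ((p : A) ^ r) = (p : B) ^ r := by
    rw [map_pow, map_natCast]
  show φ ((p : A) ^ r) ∈ Ideal.span {(p : B) ^ r}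
  rw [h]
  exact Ideal.subset_span rfl

/-- The ring homomorphism `A/p^r A → B/p^r B` induced by `φ : A → B`. -/
def inducedQuotMap {A B : Type*} [CommRing A] [CommRing B] (φ : A →+* B) (p r : ℕ) :
    A ⧸ Ideal.span {(p : A) ^ r} →+* B ⧸ Ideal.span {(p : B) ^ r} :=
  Ideal.quotientMap _ φ (spanPow_le_comap φ p r)

/-- The ring homomorphism `A[1/p] → B[1/p]` induced by `φ : A → B`. -/
noncomputable def locAwayMap {A B : Type*} [CommRing A] [CommRing B] (φ : A →+* B) (p : ℕ) :
    Localization.Away (p : A) →+* Localization.Away (p : B) :=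
  IsLocalization.Away.lift (p : A)
    (g := (algebraMap B (Localization.Away (p : B))).comp φ)
    (by
      rw [RingHom.comp_apply, map_natCast]
      exact IsLocalization.Away.algebraMap_isUnit _)

lemma isPrecomplete_pi {A ι : Type*} [CommRing A] [Finite ι] (I : Ideal A) [IsPrecomplete I A] :
    IsPrecomplete I (ι → A) := by
  classical
  have := Fintype.ofFinite ι
  refine ⟨fun f hf => ?_⟩
  have h1 : ∀ i, ∃ L : A, ∀ n, f n i ≡ L [SMOD (I ^ n • ⊤ : Submodule A A)] := fun i => by
    refine IsPrecomplete.prec' (I := I) (fun n => f n i) fun {m n} hmn => ?_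
    have h := hf hmn
    rw [SModEq.sub_mem] at h ⊢
    have h2 := Submodule.mem_map_of_mem (f := LinearMap.proj (R := A) (φ := fun _ : ι => A) i) h
    rw [Submodule.map_smul''] at h2
    exact Submodule.smul_mono le_rfl le_top h2
  choose L hL using h1
  refine ⟨L, fun n => ?_⟩
  rw [SModEq.sub_mem, pi_eq_sum_univ' (f n - L)]
  refine Submodule.sum_mem _ fun i _ => Submodule.smul_mem_smul ?_ trivial
  have h := hL i n
  rw [SModEq.sub_mem] at h
  simpa using h

/-- Nakayama's lemma over an adically complete ring: for ideals, separatedness of the ring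
replaces finite generation of the larger ideal `K`. -/
lemma le_of_le_sup_mul {A : Type*} [CommRing A] (I : Ideal A) [IsAdicComplete I A]
    (J K : Ideal A) (hJ : J.FG) (hJK : J ≤ K) (hK : K ≤ J ⊔ I * K) : K ≤ J := by
  obtain ⟨n, s, hs⟩ := Submodule.fg_iff_exists_fin_generating_family.mp hJ
  have hsK : ∀ i, s i ∈ K := fun i => hJK (hs ▸ Submodule.subset_span ⟨i, rfl⟩)
  have := isPrecomplete_pi (ι := Fin n) I
  have hH : IsHausdorff I K := ⟨fun x hx => by
    refine Subtype.ext (IsHausdorff.haus' (I := I) (x : A) fun n => ?_)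
    have h := hx n
    rw [SModEq.zero] at h ⊢
    have h2 := Submodule.mem_map_of_mem (f := K.subtype) h
    rw [Submodule.map_smul''] at h2
    exact Submodule.smul_mono le_rfl le_top h2⟩
  let f : (Fin n → A) →ₗ[A] K := Fintype.linearCombination A (fun i => (⟨s i, hsK i⟩ : K))
  have hf : ∀ v, ((f v : K) : A) = Fintype.linearCombination A s v := fun v => by
    simp [f, Fintype.linearCombination_apply]
  have hrange : ∀ x ∈ J, ∃ v, ((f v : K) : A) = x := fun x hx => by
    rw [← hs, ← Fintype.range_linearCombination A] at hx
    obtain ⟨v, rfl⟩ := hx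
    exact ⟨v, hf v⟩
  have hsurj : Function.Surjective f := by
    refine surjective_of_mkQ_comp_surjective (I := I) fun y => ?_
    obtain ⟨y, rfl⟩ := Submodule.mkQ_surjective _ y
    obtain ⟨j, hj, k, hk, hjk⟩ := Submodule.mem_sup.mp (hK y.2)
    obtain ⟨v, hv⟩ := hrange j hj
    refine ⟨v, ?_⟩
    rw [LinearMap.comp_apply, Submodule.mkQ_apply, Submodule.mkQ_apply, eq_comm,
      Submodule.Quotient.eq, Submodule.mem_smul_top_iff]
    have : ((y - f v : K) : A) = k := by
      rw [AddSubgroupClass.coe_sub, hv, ← hjk, add_sub_cancel_left]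
    rw [this]
    exact hk
  intro x hx
  obtain ⟨v, hv⟩ := hsurj ⟨x, hx⟩
  have h : x = Fintype.linearCombination A s v := by rw [← hf, hv]
  rw [h, ← hs, ← Fintype.range_linearCombination A]
  exact ⟨v, rfl⟩

lemma exists_fg_le_of_mem_map {A B : Type*} [CommRing A] [CommRing B] (φ : A →+* B)
    (K : Ideal A) {b : B} (hb : b ∈ K.map φ) : ∃ J ≤ K, J.FG ∧ b ∈ J.map φ := by
  classical
  obtain ⟨t, ht, hbt⟩ := Submodule.mem_span_finite_of_mem_span hb
  obtain ⟨u, hu, rfl⟩ := Finset.subset_set_image_iff.mp ht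
  refine ⟨Ideal.span u, Ideal.span_le.mpr hu, ⟨u, rfl⟩, ?_⟩
  rw [Ideal.map_span]
  simpa using hbt

/-- Descent of membership in an ideal, up to `p ^ r`: extension of ideals along the faithfully
flat homomorphism `A/p^r → B/p^r` is undone by contraction. -/
lemma mem_sup_span_pow_of_map_mem {A B : Type*} [CommRing A] [CommRing B] (φ : A →+* B) (p r : ℕ)
    (hff : @Module.FaithfullyFlat (A ⧸ Ideal.span {(p : A) ^ r}) (B ⧸ Ideal.span {(p : B) ^ r})
        _ _ (inducedQuotMap φ p r).toModule)
    (J : Ideal A) {x : A} (hx : φ x ∈ J.map φ) : x ∈ J ⊔ Ideal.span {(p : A) ^ r} := by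
  let : Algebra (A ⧸ Ideal.span {(p : A) ^ r}) (B ⧸ Ideal.span {(p : B) ^ r}) :=
    (inducedQuotMap φ p r).toAlgebra
  have : Module.FaithfullyFlat (A ⧸ Ideal.span {(p : A) ^ r}) (B ⧸ Ideal.span {(p : B) ^ r}) := hff
  have hcomm : (algebraMap (A ⧸ Ideal.span {(p : A) ^ r}) (B ⧸ Ideal.span {(p : B) ^ r})).comp
      (Ideal.Quotient.mk _) = (Ideal.Quotient.mk _).comp φ := rfl
  have h1 : Ideal.Quotient.mk (Ideal.span {(p : A) ^ r}) x ∈ J.map (Ideal.Quotient.mk _) := by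
    rw [← Ideal.comap_map_eq_self_of_faithfullyFlat (B := B ⧸ Ideal.span {(p : B) ^ r})
      (J.map (Ideal.Quotient.mk (Ideal.span {(p : A) ^ r}))), Ideal.map_map, hcomm, ← Ideal.map_map]
    exact Ideal.mem_map_of_mem (Ideal.Quotient.mk _) hx
  rw [← Ideal.mem_comap, Ideal.comap_map_of_surjective' _ Ideal.Quotient.mk_surjective,
    Ideal.mk_ker] at h1
  exact h1

/-- Descent of idempotent generation of ideals after inverting `p`, along a homomorphism
`φ : A → B` of `p`-adically complete and separated rings (with `p` a non-zero-divisor)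
which is faithfully flat modulo every power of `p`. -/
theorem stmt_9 (p : ℕ) (hp : p.Prime) {A B : Type*} [CommRing A] [CommRing B] (φ : A →+* B)
    (hregA : ∀ x : A, (p : A) * x = 0 → x = 0)
    (hregB : ∀ x : B, (p : B) * x = 0 → x = 0)
    (hcA : IsAdicComplete (Ideal.span {(p : A)}) A)
    (hcB : IsAdicComplete (Ideal.span {(p : B)}) B)
    (hff : ∀ r : ℕ, 1 ≤ r →
      @Module.FaithfullyFlat (A ⧸ Ideal.span {(p : A) ^ r}) (B ⧸ Ideal.span {(p : B) ^ r})
        _ _ (inducedQuotMap φ p r).toModule)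
    (I_A : Ideal (Localization.Away (p : A)))
    (I_B : Ideal (Localization.Away (p : B)))
    (hIB : I_B = I_A.map (locAwayMap φ p))
    (e : Localization.Away (p : B)) (he : e * e = e) (hgen : I_B = Ideal.span {e}) :
    ∃ e' : Localization.Away (p : A), e' * e' = e' ∧ I_A = Ideal.span {e'} := by
  have hcomm : (locAwayMap φ p).comp (algebraMap A (Localization.Away (p : A))) =
      (algebraMap B (Localization.Away (p : B))).comp φ :=
    IsLocalization.Away.lift_comp _ _
  have hpA : IsUnit (algebraMap A (Localization.Away (p : A)) p) :=
    IsLocalization.Away.algebraMap_isUnit _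
  have hinj : Function.Injective (algebraMap B (Localization.Away (p : B))) := by
    refine IsLocalization.injective (M := Submonoid.powers (p : B)) _ ?_
    refine Submonoid.powers_le.mpr (mem_nonZeroDivisors_iff.mpr ⟨hregB, fun x hx => ?_⟩)
    exact hregB x (by rwa [mul_comm])
  set K : Ideal A := I_A.comap (algebraMap A (Localization.Away (p : A))) with hKdef
  have hKmap : K.map (algebraMap A (Localization.Away (p : A))) = I_A :=
    IsLocalization.map_under (Submonoid.powers (p : A)) _ I_A
  have hKsat : ∀ (n : ℕ) (a : A), (p : A) ^ n * a ∈ K → a ∈ K := fun n a ha => by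
    rw [hKdef, Ideal.mem_comap, map_mul, map_pow] at ha
    exact (Ideal.unit_mul_mem_iff_mem _ (hpA.pow n)).mp ha
  have hIB2 : I_B * I_B = ((K * K).map φ).map (algebraMap B (Localization.Away (p : B))) := by
    rw [Ideal.map_map, ← hcomm, ← Ideal.map_map, Ideal.map_mul, hKmap, Ideal.map_mul, ← hIB]
  have heI : e ∈ I_B := hgen ▸ Ideal.mem_span_singleton_self e
  have he2 : e ∈ I_B * I_B := by
    rw [← he]
    exact Ideal.mul_mem_mul heI heI
  rw [hIB2, IsLocalization.mem_map_algebraMap_iff (Submonoid.powers (p : B))] at he2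
  -- `b = p ^ N e`, viewed in `B`
  obtain ⟨⟨⟨b, hb⟩, ⟨_, N, rfl⟩⟩, hbe⟩ := he2
  dsimp only at hbe
  obtain ⟨J, hJK, hJfg, hbJ⟩ := exists_fg_le_of_mem_map φ _ hb
  have hmem : ∀ x ∈ K, φ ((p : A) ^ N * x) ∈ J.map φ := fun x hx => by
    have hxI : algebraMap B (Localization.Away (p : B)) (φ x) ∈ I_B := by
      rw [hIB, ← RingHom.comp_apply, ← hcomm]
      exact Ideal.mem_map_of_mem _ hx
    rw [hgen] at hxI
    obtain ⟨c, hc⟩ := Ideal.mem_span_singleton'.mp hxI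
    have : φ ((p : A) ^ N * x) = b * φ x := by
      apply hinj
      rw [map_mul φ, map_pow φ, map_natCast φ, map_mul, map_mul, ← hbe, ← hc]
      linear_combination
        (-(algebraMap B (Localization.Away (p : B)) ((p : B) ^ N)) * c) * he
    rw [this]
    exact Ideal.mul_mem_right _ _ hbJ
  have hle : Ideal.span {(p : A) ^ N} * K ≤ J := by
    refine le_sup_right.trans (le_of_le_sup_mul (Ideal.span {(p : A)}) J
      (J ⊔ Ideal.span {(p : A) ^ N} * K) hJfg le_sup_left (sup_le le_sup_left ?_))
    intro y hy
    obtain ⟨x, hx, rfl⟩ := Ideal.mem_span_singleton_mul.mp hy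
    -- The exponent `N + 1` leaves one factor `p` beyond the `p ^ N` of the ideal `p ^ N K`.
    obtain ⟨j, hj, z, hz, hjz⟩ := Submodule.mem_sup.mp
      (mem_sup_span_pow_of_map_mem φ p (N + 1) (hff _ (Nat.le_add_left 1 N)) J (hmem x hx))
    obtain ⟨a, rfl⟩ := Ideal.mem_span_singleton.mp hz
    have ha : a ∈ K := by
      refine hKsat (N + 1) a ?_
      rw [← eq_sub_iff_add_eq'] at hjz
      rw [hjz]
      exact K.sub_mem (K.mul_mem_left _ hx) (Ideal.mul_le_left (hJK hj))
    rw [← hjz]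
    refine Submodule.add_mem_sup hj ?_
    rw [pow_succ', mul_assoc]
    exact Ideal.mul_mem_mul (Ideal.mem_span_singleton_self _) (Ideal.mem_sup_right
      (Ideal.mul_mem_mul (Ideal.mem_span_singleton_self _) ha))
  have hJmap : J.map (algebraMap A (Localization.Away (p : A))) = I_A := by
    refine le_antisymm ?_ ?_
    · rw [← hKmap]
      exact Ideal.map_mono (hJK.trans Ideal.mul_le_left)
    · rw [← hKmap, Ideal.map_le_iff_le_comap]
      intro x hx
      have h := Ideal.mem_map_of_mem (algebraMap A (Localization.Away (p : A)))
        (hle (Ideal.mul_mem_mul (Ideal.mem_span_singleton_self _) hx))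
      rw [map_mul, map_pow] at h
      exact (Ideal.unit_mul_mem_iff_mem _ (hpA.pow N)).mp h
  have hidem : IsIdempotentElem I_A := by
    refine le_antisymm Ideal.mul_le_left ?_
    have h := Ideal.map_mono (f := algebraMap A (Localization.Away (p : A))) hJK
    rwa [hJmap, Ideal.map_mul, hKmap] at h
  exact (Ideal.isIdempotentElem_iff_of_fg I_A (hJmap ▸ hJfg.map _)).mp hidem
end

section
/- Let p be a prime and φ : A → B a homomorphism of commutative rings such that: p is a non-zero-divisor in A and in B; A and B are p-adically complete and separated; and the induced homomorphism A/p^r A → B/p^r B is faithfully flat for every r ≥ 1. Let f : A[1/p]^l → A[1/p]^m be an A[1/p]-linear map, and let f_B : B[1/p]^l → B[1/p]^m be its base change along the induced map A[1/p] → B[1/p]. If Coker(f_B) is a projective B[1/p]-module, then Coker(f) is a projective A[1/p]-module. -/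
open Matrix TensorProduct

/-- Along a faithfully flat algebra, a finite linear system that is solvable after base change
is solvable. -/
lemma exists_solution_of_faithfullyFlat {R S : Type*} [CommRing R] [CommRing S] [Algebra R S]
    [Module.FaithfullyFlat R S] {κ ι : Type*} [Fintype κ] [DecidableEq κ] [Fintype ι]
    (M : κ → ι → R) (v : κ → R) (s : ι → S)
    (h : ∀ k, algebraMap R S (v k) = ∑ i, s i * algebraMap R S (M k i)) :
    ∃ x : ι → R, ∀ k, v k = ∑ i, x i * M k i := by
  let c : ι → κ → R := fun i k => M k i
  let P : Submodule R (κ → R) := Submodule.span R (Set.range c)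
  have hv : ∀ w : κ → R, w = ∑ k, w k • (Pi.single k (1 : R) : κ → R) := fun w =>
    pi_eq_sum_univ' w |>.trans (by simp)
  have key : (1 : S) ⊗ₜ[R] v = ∑ i, s i ⊗ₜ[R] c i := by
    conv_lhs => rw [hv v]
    have h2 : ∀ i, s i ⊗ₜ[R] c i = ∑ k, (s i * algebraMap R S (M k i)) ⊗ₜ[R]
        (Pi.single k (1 : R) : κ → R) := fun i => by
      conv_lhs => rw [hv (c i), TensorProduct.tmul_sum]
      refine Finset.sum_congr rfl fun k _ => ?_
      rw [TensorProduct.tmul_smul, TensorProduct.smul_tmul', Algebra.smul_def, mul_comm]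
    simp_rw [h2]
    rw [Finset.sum_comm, TensorProduct.tmul_sum]
    refine Finset.sum_congr rfl fun k _ => ?_
    rw [← TensorProduct.sum_tmul, ← h k, TensorProduct.tmul_smul, TensorProduct.smul_tmul',
      Algebra.smul_def, mul_one]
  have hz : (1 : S) ⊗ₜ[R] (P.mkQ v) = 0 := by
    have := congrArg (LinearMap.lTensor S P.mkQ) key
    rw [map_sum, LinearMap.lTensor_tmul] at this
    rw [this]
    refine Finset.sum_eq_zero fun i _ => ?_
    have hi : P.mkQ (c i) = 0 := by
      rw [Submodule.mkQ_apply, Submodule.Quotient.mk_eq_zero]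
      exact Submodule.subset_span ⟨i, rfl⟩
    rw [LinearMap.lTensor_tmul, hi, TensorProduct.tmul_zero]
  rw [Module.FaithfullyFlat.one_tmul_eq_zero_iff, Submodule.mkQ_apply,
    Submodule.Quotient.mk_eq_zero] at hz
  obtain ⟨x, hx⟩ := (Submodule.mem_span_range_iff_exists_fun R).1 hz
  refine ⟨x, fun k => ?_⟩
  rw [← hx]
  simp [c]

lemma mul_mul_apply_eq_sum {R : Type*} [CommRing R] {l m : ℕ} (F : Matrix (Fin m) (Fin l) R)
    (Y : Matrix (Fin l) (Fin m) R) (a : Fin m) (b : Fin l) :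
    (F * Y * F) a b = ∑ i : Fin l × Fin m, Y i.1 i.2 * (F a i.1 * F i.2 b) := by
  simp only [Matrix.mul_apply, Finset.sum_mul]
  rw [Finset.sum_comm, ← Finset.univ_product_univ, Finset.sum_product]
  exact Finset.sum_congr rfl fun _ _ => Finset.sum_congr rfl fun _ _ => by ring

/-- If `u = F Y F` has a solution `Y` over `B`, then it has a solution over `A`
modulo `p ^ r`. -/
lemma exists_solution_mod_pow {p : ℕ} {A B : Type*} [CommRing A] [CommRing B] (φ : A →+* B)
    (r : ℕ)
    (hff : @Module.FaithfullyFlat (A ⧸ Ideal.span {(p : A) ^ r}) (B ⧸ Ideal.span {(p : B) ^ r})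
        _ _ (inducedQuotMap φ p r).toModule)
    {l m : ℕ} (F u : Matrix (Fin m) (Fin l) A) (Y : Matrix (Fin l) (Fin m) B)
    (h : u.map φ = F.map φ * Y * F.map φ) :
    ∃ (X : Matrix (Fin l) (Fin m) A) (u' : Matrix (Fin m) (Fin l) A),
      u = F * X * F + (p : A) ^ r • u' := by
  letI := (inducedQuotMap φ p r).toAlgebra
  haveI : Module.FaithfullyFlat (A ⧸ Ideal.span {(p : A) ^ r}) (B ⧸ Ideal.span {(p : B) ^ r}) :=
    hff
  have hmap : ∀ a : A, algebraMap (A ⧸ Ideal.span {(p : A) ^ r}) (B ⧸ Ideal.span {(p : B) ^ r})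
      (Ideal.Quotient.mk _ a) = Ideal.Quotient.mk _ (φ a) := fun a => rfl
  obtain ⟨x, hx⟩ := exists_solution_of_faithfullyFlat
    (R := A ⧸ Ideal.span {(p : A) ^ r}) (S := B ⧸ Ideal.span {(p : B) ^ r})
    (fun (k : Fin m × Fin l) (i : Fin l × Fin m) =>
      Ideal.Quotient.mk _ (F k.1 i.1 * F i.2 k.2))
    (fun k => Ideal.Quotient.mk _ (u k.1 k.2)) (fun i => Ideal.Quotient.mk _ (Y i.1 i.2))
    (fun k => by
      have hk := congrFun (congrFun h k.1) k.2
      rw [mul_mul_apply_eq_sum, Matrix.map_apply] at hk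
      simp only [hmap]
      rw [hk, map_sum]
      simp only [map_mul, Matrix.map_apply])
  choose X hX using fun i => Ideal.Quotient.mk_surjective (x i)
  have hdiv : ∀ a b, ∃ w, u a b - (F * Matrix.of (fun i j => X (i, j)) * F) a b =
      (p : A) ^ r * w := by
    intro a b
    rw [← dvd_def, ← Ideal.mem_span_singleton, ← Ideal.Quotient.eq, mul_mul_apply_eq_sum]
    simpa [← hX] using hx (a, b)
  choose w hw using hdiv
  refine ⟨Matrix.of fun i j => X (i, j), Matrix.of w, ?_⟩
  ext a b
  simpa [sub_eq_iff_eq_add'] using hw a b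

/-- In a `q`-adically complete ring, the series `∑ q ^ k X_k` converges. -/
lemma exists_padic_sum {A : Type*} [CommRing A] (q : A) (hc : IsAdicComplete (Ideal.span {q}) A)
    (X : ℕ → A) : ∃ G : A, ∀ n, q ^ n ∣ (∑ k ∈ Finset.range n, q ^ k * X k) - G := by
  have e : ∀ (n : ℕ) (x y : A), x ≡ y [SMOD ((Ideal.span {q}) ^ n • ⊤ : Submodule A A)] ↔
      q ^ n ∣ x - y := fun n x y => by
    rw [SModEq.sub_mem, smul_eq_mul, Ideal.mul_top, Ideal.span_singleton_pow,
      Ideal.mem_span_singleton]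
  obtain ⟨G, hG⟩ := hc.toIsPrecomplete.prec
    (f := fun n => ∑ k ∈ Finset.range n, q ^ k * X k) (fun {a b} hab => by
      rw [e, ← dvd_neg, neg_sub, Finset.sum_range_sub_sum_range hab]
      refine Finset.dvd_sum fun k hk => Dvd.dvd.mul_right (pow_dvd_pow _ ?_) _
      simp at hk
      exact hk.2)
  exact ⟨G, fun n => (e n _ _).1 (hG n)⟩

lemma eq_zero_of_forall_pow_dvd {A : Type*} [CommRing A] (q : A)
    (hc : IsAdicComplete (Ideal.span {q}) A) (x : A) (h : ∀ n, q ^ n ∣ x) : x = 0 := by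
  refine hc.toIsHausdorff.haus x fun n => ?_
  rw [SModEq.sub_mem, smul_eq_mul, Ideal.mul_top, Ideal.span_singleton_pow,
      Ideal.mem_span_singleton, sub_zero]
  exact h n

/-- Integral form of the descent of von Neumann regularity: if `F H F = p ^ N F` over `B`, then
`F G F = p ^ (2N) F` for some `G` over `A`. -/
lemma exists_regular_descent {p : ℕ} {A B : Type*} [CommRing A] [CommRing B] (φ : A →+* B)
    (hregB : ∀ x : B, (p : B) * x = 0 → x = 0)
    (hcA : IsAdicComplete (Ideal.span {(p : A)}) A)
    (hff : ∀ r : ℕ, 1 ≤ r →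
      @Module.FaithfullyFlat (A ⧸ Ideal.span {(p : A) ^ r}) (B ⧸ Ideal.span {(p : B) ^ r})
        _ _ (inducedQuotMap φ p r).toModule)
    {l m : ℕ} (F : Matrix (Fin m) (Fin l) A) (H : Matrix (Fin l) (Fin m) B) (N : ℕ)
    (h : F.map φ * H * F.map φ = (p : B) ^ N • F.map φ) :
    ∃ G : Matrix (Fin l) (Fin m) A, F * G * F = (p : A) ^ (2 * N) • F := by
  set Fb := F.map φ with hFb
  have hreg : ∀ (n : ℕ) (x : B), (p : B) ^ n * x = 0 → x = 0 := by
    intro n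
    induction n with
    | zero => simp
    | succ n ih => exact fun x hx => hregB _ (ih _ (by rw [← mul_assoc, ← pow_succ]; exact hx))
  have hregM : ∀ (n : ℕ) (U V : Matrix (Fin m) (Fin l) B),
      (p : B) ^ n • U = (p : B) ^ n • V → U = V := by
    intro n U V hUV
    ext a b
    have := congrFun (congrFun hUV a) b
    simp only [Matrix.smul_apply, smul_eq_mul] at this
    exact sub_eq_zero.1 (hreg n _ (by rw [mul_sub, this, sub_self]))
  -- `K` is the saturated set of those `u` fixed, up to a scalar, by `u ↦ F H u H F`.
  let K : Matrix (Fin m) (Fin l) A → Prop := fun u =>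
    Fb * H * u.map φ * H * Fb = (p : B) ^ (2 * N) • u.map φ
  have hmapsmul : ∀ (n : ℕ) (u : Matrix (Fin m) (Fin l) A),
      ((p : A) ^ n • u).map φ = (p : B) ^ n • u.map φ := by
    intro n u; ext a b; simp
  have hKF : K F := by
    show Fb * H * Fb * H * Fb = _
    rw [h, Matrix.smul_mul, Matrix.smul_mul, h, smul_smul, ← pow_add, two_mul]
  have hKX : ∀ X : Matrix (Fin l) (Fin m) A, K (F * X * F) := by
    intro X
    show Fb * H * (F * X * F).map φ * H * Fb = _
    have e : (F * X * F).map φ = Fb * X.map φ * Fb := by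
      rw [Matrix.map_mul, Matrix.map_mul]
    rw [e]
    calc Fb * H * (Fb * X.map φ * Fb) * H * Fb
        = (Fb * H * Fb) * X.map φ * (Fb * H * Fb) := by simp only [Matrix.mul_assoc]
      _ = _ := by
        rw [h, Matrix.smul_mul, Matrix.smul_mul, Matrix.mul_smul, smul_smul, ← pow_add, two_mul]
  -- The same exponent `2N` works for all `u` in `K`, and the remainder stays in `K`; this is what
  -- lets the approximation be iterated.
  have step : ∀ u : {u // K u}, ∃ (X : Matrix (Fin l) (Fin m) A) (u' : {u // K u}),
      (p : A) ^ (2 * N) • u.1 = F * X * F + (p : A) ^ (2 * N + 1) • u'.1 := by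
    rintro ⟨u, hu⟩
    obtain ⟨X, u', hX⟩ := exists_solution_mod_pow (p := p) φ (2 * N + 1)
      (hff (2 * N + 1) (by omega))
      F ((p : A) ^ (2 * N) • u) (H * u.map φ * H) (by
        rw [hmapsmul, ← hu]; simp only [Matrix.mul_assoc, hFb])
    refine ⟨X, ⟨u', ?_⟩, hX⟩
    have e : (p : B) ^ (2 * N + 1) • u'.map φ =
        (p : B) ^ (2 * N) • u.map φ - (F * X * F).map φ := by
      rw [← hmapsmul, ← hmapsmul, hX, Matrix.map_add _ (map_add φ), add_sub_cancel_left]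
    apply hregM (2 * N + 1)
    have hx := hKX X
    simp only [K] at hx hu
    calc (p : B) ^ (2 * N + 1) • (Fb * H * u'.map φ * H * Fb)
        = Fb * H * ((p : B) ^ (2 * N + 1) • u'.map φ) * H * Fb := by
          simp only [Matrix.mul_smul, Matrix.smul_mul]
      _ = (p : B) ^ (2 * N) • ((p : B) ^ (2 * N + 1) • u'.map φ) := by
          rw [e, Matrix.mul_sub, Matrix.sub_mul, Matrix.sub_mul, hx, Matrix.mul_smul,
            Matrix.smul_mul, Matrix.smul_mul, hu, smul_sub]
      _ = _ := smul_comm _ _ _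
  choose Xf nx hnx using step
  let us : ℕ → {u // K u} := fun n => nx^[n] ⟨F, hKF⟩
  have hus : ∀ n, (p : A) ^ (2 * N) • F =
      F * (∑ k ∈ Finset.range n, (p : A) ^ k • Xf (us k)) * F +
        (p : A) ^ n • ((p : A) ^ (2 * N) • (us n).1) := by
    intro n
    induction n with
    | zero => simp [us]
    | succ n ih =>
      have e : us (n + 1) = nx (us n) := Function.iterate_succ_apply' _ _ _
      rw [ih, hnx, e, Finset.sum_range_succ, Matrix.mul_add, Matrix.add_mul, Matrix.mul_smul,
        Matrix.smul_mul, smul_add, add_assoc, smul_smul, smul_smul]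
      congr 3
      ring
  choose G hG using fun i j => exists_padic_sum (p : A) hcA (fun k => Xf (us k) i j)
  refine ⟨Matrix.of G, ?_⟩
  choose D hD using hG
  ext a b
  refine (sub_eq_zero.1 (eq_zero_of_forall_pow_dvd (p : A) hcA _ fun n => ?_)).symm
  have hs : (∑ k ∈ Finset.range n, (p : A) ^ k • Xf (us k)) =
      Matrix.of G + (p : A) ^ n • Matrix.of (fun i j => D i j n) := by
    ext i j
    simpa [Matrix.sum_apply, sub_eq_iff_eq_add'] using hD i j n
  have h1 := congrFun (congrFun (hus n) a) b
  rw [hs, Matrix.mul_add, Matrix.add_mul, Matrix.mul_smul, Matrix.smul_mul] at h1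
  rw [h1]
  simp only [Matrix.add_apply, Matrix.smul_apply, smul_eq_mul]
  exact ⟨(F * Matrix.of (fun i j => D i j n) * F) a b + (p : A) ^ (2 * N) * (us n).1 a b, by ring⟩

/-- A map into a projective module has projective cokernel iff it is von Neumann regular. -/
lemma projective_coker_iff {R : Type*} [CommRing R] {V W : Type*} [AddCommGroup V] [Module R V]
    [AddCommGroup W] [Module R W] [Module.Projective R W] (f : V →ₗ[R] W) :
    Module.Projective R (W ⧸ LinearMap.range f) ↔ ∃ g : W →ₗ[R] V, f ∘ₗ g ∘ₗ f = f := by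
  constructor
  · intro hP
    obtain ⟨s, hs⟩ := Module.projective_lifting_property (LinearMap.range f).mkQ
      (LinearMap.id (R := R) (M := W ⧸ LinearMap.range f)) (Submodule.mkQ_surjective _)
    have hmem : ∀ w, w - s ((LinearMap.range f).mkQ w) ∈ LinearMap.range f := fun w => by
      rw [← Submodule.Quotient.mk_eq_zero, ← Submodule.mkQ_apply, map_sub, sub_eq_zero]
      exact (LinearMap.congr_fun hs _).symm
    obtain ⟨g, hg⟩ := Module.projective_lifting_property f.rangeRestrict
      ((LinearMap.id - s ∘ₗ (LinearMap.range f).mkQ).codRestrict (LinearMap.range f) hmem)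
      f.surjective_rangeRestrict
    refine ⟨g, LinearMap.ext fun v => ?_⟩
    have h1 := congrArg Subtype.val (LinearMap.congr_fun hg (f v))
    have h2 : (LinearMap.range f).mkQ (f v) = 0 :=
      (Submodule.Quotient.mk_eq_zero _).2 ⟨v, rfl⟩
    have h3 : f (g (f v)) = f v - s ((LinearMap.range f).mkQ (f v)) := h1
    rw [h2, map_zero, sub_zero] at h3
    exact h3
  · rintro ⟨g, hg⟩
    refine Module.Projective.of_split
      ((LinearMap.range f).liftQ (LinearMap.id - f ∘ₗ g) ?_) (LinearMap.range f).mkQ ?_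
    · rintro _ ⟨v, rfl⟩
      rw [LinearMap.mem_ker]
      have := LinearMap.congr_fun hg v
      simp only [LinearMap.comp_apply] at this
      simp [this]
    · ext w
      simp

/-- Matrices over `R[1/p]` become integral after multiplication by a power of `p`. -/
lemma exists_integral_matrix {R : Type*} [CommRing R] (q : R) {m n : ℕ}
    (M : Matrix (Fin m) (Fin n) (Localization.Away q)) :
    ∃ (a : ℕ) (F : Matrix (Fin m) (Fin n) R),
      F.map (algebraMap R (Localization.Away q)) =
        (algebraMap R (Localization.Away q) q) ^ a • M := by
  obtain ⟨⟨_, a, rfl⟩, hb⟩ := IsLocalization.exist_integer_multiples_of_finite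
    (Submonoid.powers q) (fun i : Fin m × Fin n => M i.1 i.2)
  choose F hF using hb
  refine ⟨a, Matrix.of fun i j => F (i, j), ?_⟩
  ext i j
  simpa [Algebra.smul_def] using hF (i, j)

/-- Descent of projectivity of cokernels after inverting `p`: if the cokernel of the base
change `f_B : B[1/p]^l → B[1/p]^m` of `f : A[1/p]^l → A[1/p]^m` is projective, then so is
the cokernel of `f`. Here `φ : A → B` is a homomorphism of `p`-adically complete and
separated rings (with `p` a non-zero-divisor) which is faithfully flat modulo every power
of `p`. -/
theorem stmt_10 (p : ℕ) (hp : p.Prime) {A B : Type*} [CommRing A] [CommRing B] (φ : A →+* B)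
    (hregA : ∀ x : A, (p : A) * x = 0 → x = 0)
    (hregB : ∀ x : B, (p : B) * x = 0 → x = 0)
    (hcA : IsAdicComplete (Ideal.span {(p : A)}) A)
    (hcB : IsAdicComplete (Ideal.span {(p : B)}) B)
    (hff : ∀ r : ℕ, 1 ≤ r →
      @Module.FaithfullyFlat (A ⧸ Ideal.span {(p : A) ^ r}) (B ⧸ Ideal.span {(p : B) ^ r})
        _ _ (inducedQuotMap φ p r).toModule)
    (l m : ℕ)
    (f : (Fin l → Localization.Away (p : A)) →ₗ[Localization.Away (p : A)]
      (Fin m → Localization.Away (p : A)))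
    (fB : (Fin l → Localization.Away (p : B)) →ₗ[Localization.Away (p : B)]
      (Fin m → Localization.Away (p : B)))
    (hfB : fB = Matrix.toLin' ((LinearMap.toMatrix' f).map (locAwayMap φ p)))
    (hproj : Module.Projective (Localization.Away (p : B))
      ((Fin m → Localization.Away (p : B)) ⧸ LinearMap.range fB)) :
    Module.Projective (Localization.Away (p : A))
      ((Fin m → Localization.Away (p : A)) ⧸ LinearMap.range f) := by
  rw [projective_coker_iff] at hproj ⊢
  obtain ⟨h, hh⟩ := hproj
  set Mf := LinearMap.toMatrix' f with hMf
  set Mh := LinearMap.toMatrix' h with hMh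
  have hreg : Mf.map (locAwayMap φ p) * Mh * Mf.map (locAwayMap φ p) =
      Mf.map (locAwayMap φ p) := by
    have := congrArg LinearMap.toMatrix' hh
    rwa [LinearMap.toMatrix'_comp, LinearMap.toMatrix'_comp, hfB, LinearMap.toMatrix'_toLin',
      ← Matrix.mul_assoc] at this
  obtain ⟨a, F, hF⟩ := exists_integral_matrix (p : A) Mf
  obtain ⟨b, H, hH⟩ := exists_integral_matrix (p : B) Mh
  rw [map_natCast] at hF hH
  have hloc : ∀ x : A, locAwayMap φ p (algebraMap A _ x) = algebraMap B _ (φ x) := fun x =>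
    IsLocalization.Away.lift_eq (p : A) _ x
  have hFB : (F.map φ).map (algebraMap B (Localization.Away (p : B))) =
      (p : Localization.Away (p : B)) ^ a • Mf.map (locAwayMap φ p) := by
    ext i j
    have := congrArg (locAwayMap φ p) (congrFun (congrFun hF i) j)
    simpa [hloc] using this
  have hinj : Function.Injective (algebraMap B (Localization.Away (p : B))) := by
    refine IsLocalization.injective _ (M := Submonoid.powers (p : B)) ?_
    refine Submonoid.powers_le.2 ?_
    rw [mem_nonZeroDivisors_iff_right]
    exact fun x hx => hregB x (by rwa [mul_comm])
  obtain ⟨G, hG⟩ := exists_regular_descent φ hregB hcA hff F H (a + b) (by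
    apply Matrix.map_injective hinj
    have e : ((p : B) ^ (a + b) • F.map φ).map (algebraMap B (Localization.Away (p : B))) =
        (p : Localization.Away (p : B)) ^ (a + b) •
          (F.map φ).map (algebraMap B (Localization.Away (p : B))) := by
      ext i j; simp
    simp only [Matrix.map_mul, hFB, hH, e, Matrix.smul_mul, Matrix.mul_smul, hreg, smul_smul]
    congr 1
    ring)
  have hu : IsUnit (p : Localization.Away (p : A)) := by
    have := IsLocalization.Away.algebraMap_isUnit (S := Localization.Away (p : A)) (p : A)
    rwa [map_natCast] at this
  obtain ⟨q, hq⟩ := hu.exists_left_inv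
  have hGl := congrArg (fun M => M.map (algebraMap A (Localization.Away (p : A)))) hG
  have e : ((p : A) ^ (2 * (a + b)) • F).map (algebraMap A (Localization.Away (p : A))) =
      (p : Localization.Away (p : A)) ^ (2 * (a + b)) •
        F.map (algebraMap A (Localization.Away (p : A))) := by
    ext i j; simp
  simp only [Matrix.map_mul, e, hF, Matrix.smul_mul, Matrix.mul_smul, smul_smul] at hGl
  set Gl := G.map (algebraMap A (Localization.Away (p : A)))
  -- As `F = p ^ a f`, the equation `F G F = p ^ (2(a+b)) F` reads `f G f = p ^ (a+2b) f`;
  -- the scalar is the inverse of that power of `p`.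
  refine ⟨Matrix.toLin' ((q ^ (a + 2 * b)) • Gl), ?_⟩
  apply LinearMap.toMatrix'.injective
  rw [LinearMap.toMatrix'_comp, LinearMap.toMatrix'_comp, LinearMap.toMatrix'_toLin', ← hMf,
    ← Matrix.mul_assoc, Matrix.mul_smul, Matrix.smul_mul]
  have hqn : ∀ n : ℕ, q ^ n * (p : Localization.Away (p : A)) ^ n = 1 := fun n => by
    rw [← mul_pow, hq, one_pow]
  have h4 := congrArg (fun M => (q ^ (2 * (a + b) + a)) • M) hGl
  simp only [smul_smul] at h4
  have e1 : q ^ (2 * (a + b) + a) * ((p : Localization.Away (p : A)) ^ a * p ^ a) =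
      q ^ (a + 2 * b) := by
    rw [← pow_add, show 2 * (a + b) + a = (a + 2 * b) + (a + a) by ring, pow_add, mul_assoc, hqn,
      mul_one]
  have e2 : q ^ (2 * (a + b) + a) *
      ((p : Localization.Away (p : A)) ^ (2 * (a + b)) * p ^ a) = 1 := by
    rw [← pow_add, hqn]
  rw [e1, e2, one_smul] at h4
  exact h4
end

section
/- Let p be a prime and φ : A → B a homomorphism of commutative rings such that p is a non-zero-divisor in A and in B. If B/pB is a flat A/pA-module, then B/p^r B is a flat A/p^r A-module for every r ≥ 1; if moreover B/pB is a faithfully flat A/pA-module, then B/p^r B is a faithfully flat A/p^r A-module for every r ≥ 1. -/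
/-- Every congruence `∑ fᵢ xᵢ ≡ 0 mod pⁿ` with `fᵢ ∈ A`, `xᵢ ∈ B` is trivial modulo `pⁿ`: the
equational criterion for flatness of `B/pⁿB` over `A/pⁿA`, with the error terms `w` and `g`
recorded in `B` and `A` rather than killed in the quotients. -/
def RelationsTrivialModPow {A B : Type*} [CommRing A] [CommRing B] (φ : A →+* B) (p n : ℕ) :
    Prop :=
  ∀ (ι : Type) [Fintype ι] (f : ι → A) (x : ι → B) (z : B),
    ∑ i, φ (f i) * x i = (p : B) ^ n * z →
    ∃ (κ : Type) (_ : Fintype κ) (a : ι → κ → A) (y : κ → B) (w : ι → B) (g : κ → A),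
      (∀ i, x i = ∑ j, φ (a i j) * y j + (p : B) ^ n * w i) ∧
      ∀ j, ∑ i, f i * a i j = (p : A) ^ n * g j

section

variable {A B : Type*} [CommRing A] [CommRing B] (φ : A →+* B) (p : ℕ)

lemma relationsTrivialModPow_of_flat (n : ℕ)
    (h : @Module.Flat (A ⧸ Ideal.span {(p : A) ^ n}) (B ⧸ Ideal.span {(p : B) ^ n})
      _ _ (inducedQuotMap φ p n).toModule) : RelationsTrivialModPow φ p n := by
  let := (inducedQuotMap φ p n).toModule
  intro ι _ f x z hz
  let qA := Ideal.Quotient.mk (Ideal.span {(p : A) ^ n})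
  let qB := Ideal.Quotient.mk (Ideal.span {(p : B) ^ n})
  have smul_eq (a : A) (b : B) : qA a • qB b = qB (φ a * b) := rfl
  have h0 : ∑ i, qA (f i) • qB (x i) = 0 := by
    simp only [smul_eq, ← map_sum, hz]
    exact Ideal.Quotient.eq_zero_iff_mem.2 (Ideal.mem_span_singleton'.2 ⟨z, mul_comm _ _⟩)
  obtain ⟨k, a, y, h1, h2⟩ := Module.Flat.isTrivialRelation_of_sum_smul_eq_zero h0
  choose a' ha' using fun i j => Ideal.Quotient.mk_surjective (a i j)
  choose y' hy' using fun j => Ideal.Quotient.mk_surjective (y j)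
  have h1' (i) : ∃ w, x i = ∑ j, φ (a' i j) * y' j + (p : B) ^ n * w := by
    have : qB (x i) = qB (∑ j, φ (a' i j) * y' j) := by
      rw [map_sum]
      refine (h1 i).trans ?_
      exact Finset.sum_congr rfl fun j _ => by rw [← smul_eq, ← ha', ← hy']
    obtain ⟨w, hw⟩ := Ideal.mem_span_singleton.1 (Ideal.Quotient.eq.1 this)
    exact ⟨w, by rw [← hw]; ring⟩
  have h2' (j) : ∃ g, ∑ i, f i * a' i j = (p : A) ^ n * g := by
    refine Ideal.mem_span_singleton.1 (Ideal.Quotient.eq_zero_iff_mem.1 ?_)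
    rw [map_sum, ← h2 j]
    exact Finset.sum_congr rfl fun i _ => by rw [map_mul, ha']
  choose w hw using h1'
  choose g hg using h2'
  exact ⟨Fin k, inferInstance, a', y', w, g, hw, hg⟩

lemma flat_of_relationsTrivialModPow (n : ℕ) (h : RelationsTrivialModPow φ p n) :
    @Module.Flat (A ⧸ Ideal.span {(p : A) ^ n}) (B ⧸ Ideal.span {(p : B) ^ n})
      _ _ (inducedQuotMap φ p n).toModule := by
  let := (inducedQuotMap φ p n).toModule
  let qA := Ideal.Quotient.mk (Ideal.span {(p : A) ^ n})
  let qB := Ideal.Quotient.mk (Ideal.span {(p : B) ^ n})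
  have smul_eq (a : A) (b : B) : qA a • qB b = qB (φ a * b) := rfl
  have hqA (a : A) : qA ((p : A) ^ n * a) = 0 :=
    Ideal.Quotient.eq_zero_iff_mem.2 (Ideal.mem_span_singleton.2 ⟨a, rfl⟩)
  have hqB (b : B) : qB ((p : B) ^ n * b) = 0 :=
    Ideal.Quotient.eq_zero_iff_mem.2 (Ideal.mem_span_singleton.2 ⟨b, rfl⟩)
  refine Module.Flat.iff_forall_isTrivialRelation.2 fun {l f x} h0 => ?_
  choose f' hf' using fun i => Ideal.Quotient.mk_surjective (f i)
  choose x' hx' using fun i => Ideal.Quotient.mk_surjective (x i)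
  obtain rfl : (fun i => qA (f' i)) = f := funext hf'
  obtain rfl : (fun i => qB (x' i)) = x := funext hx'
  simp only [smul_eq, ← map_sum] at h0
  obtain ⟨z, hz⟩ := Ideal.mem_span_singleton.1 (Ideal.Quotient.eq_zero_iff_mem.1 h0)
  obtain ⟨κ, _, a, y, w, g, h1, h2⟩ := h (Fin l) f' x' z hz
  let e := (Fintype.equivFin κ).symm
  refine ⟨Fintype.card κ, fun i j => qA (a i (e j)), fun j => qB (y (e j)), fun i => ?_,
    fun j => ?_⟩
  · rw [e.sum_comp (fun j => qA (a i j) • qB (y j))]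
    simp only [smul_eq, ← map_sum]
    rw [h1 i, map_add, hqB, add_zero]
  · simp only [← map_mul, ← map_sum]
    rw [h2, hqA]

/-- The inductive step, by trivializing first modulo `p` and then modulo `pⁿ`. The order matters:
the error `p * w` of the first step is fed into the second one, whose error `pⁿ y'` is absorbed by
taking the `y'` as additional generators with coefficients `pⁿ a`. -/
lemma RelationsTrivialModPow.succ {φ : A →+* B} {p n : ℕ}
    (hregB : ∀ x : B, (p : B) * x = 0 → x = 0)
    (h1 : RelationsTrivialModPow φ p 1) (hn : RelationsTrivialModPow φ p n) :
    RelationsTrivialModPow φ p (n + 1) := by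
  intro ι _ f x z hz
  obtain ⟨κ, _, a, y, w, g, hx, hf⟩ := h1 ι f x ((p : B) ^ n * z) (by rw [hz]; ring)
  simp only [pow_one] at hx hf
  have hf' (j) : ∑ i, φ (f i) * φ (a i j) = (p : B) * φ (g j) := by
    simpa using congrArg φ (hf j)
  -- The second relation, in the combined family `(g, f)` against `(y, w)`.
  have key : ∑ s : κ ⊕ ι, φ (Sum.elim g f s) * Sum.elim y w s = (p : B) ^ n * z := by
    rw [← sub_eq_zero]
    apply hregB
    have e1 : ∑ i, φ (f i) * x i
        = ∑ j, (p : B) * φ (g j) * y j + (p : B) * ∑ i, φ (f i) * w i := by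
      simp only [← hf', hx, mul_add, Finset.sum_add_distrib, Finset.mul_sum, Finset.sum_mul]
      rw [Finset.sum_comm]
      simp only [mul_assoc, mul_left_comm]
    rw [mul_sub, ← mul_assoc, ← pow_succ', ← hz, e1]
    simp [mul_add, Finset.mul_sum, mul_assoc]
  obtain ⟨μ, _, b, u, v, d, hyw, hgf⟩ := hn (κ ⊕ ι) (Sum.elim g f) (Sum.elim y w) z key
  have hy (j) := hyw (Sum.inl j)
  have hw (i) := hyw (Sum.inr i)
  simp only [Sum.elim_inl, Sum.elim_inr, Fintype.sum_sum_type] at hy hw hgf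
  refine ⟨μ ⊕ κ, inferInstance,
    fun i => Sum.elim (fun k => ∑ j, a i j * b (Sum.inl j) k + p * b (Sum.inr i) k)
      (fun j => (p : A) ^ n * a i j),
    Sum.elim u (fun j => v (Sum.inl j)), fun i => v (Sum.inr i), Sum.elim d g, fun i => ?_, ?_⟩
  · have e1 : ∑ j, φ (a i j) * y j = ∑ k, (∑ j, φ (a i j) * φ (b (Sum.inl j) k)) * u k
        + ∑ j, (p : B) ^ n * φ (a i j) * v (Sum.inl j) := by
      simp only [hy, mul_add, Finset.sum_add_distrib, Finset.mul_sum, Finset.sum_mul]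
      rw [Finset.sum_comm]
      simp only [mul_assoc, mul_left_comm]
    have e2 : (p : B) * w i = ∑ k, (p : B) * φ (b (Sum.inr i) k) * u k
        + (p : B) ^ (n + 1) * v (Sum.inr i) := by
      rw [hw, mul_add, Finset.mul_sum, pow_succ']
      simp only [mul_assoc]
    rw [hx i, e1, e2]
    simp only [Fintype.sum_sum_type, Sum.elim_inl, Sum.elim_inr, map_add, map_sum, map_mul,
      map_pow, map_natCast, add_mul, Finset.sum_add_distrib]
    ring
  · rintro (k | j)
    · simp only [Sum.elim_inl]
      rw [pow_succ', mul_assoc, ← hgf k, mul_add, Finset.mul_sum, Finset.mul_sum]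
      simp only [← mul_assoc, ← hf, mul_add, Finset.sum_add_distrib, Finset.mul_sum,
        Finset.sum_mul]
      rw [Finset.sum_comm]
      simp only [mul_comm (p : A)]
    · simp only [Sum.elim_inr]
      rw [pow_succ, mul_assoc, ← hf j, Finset.mul_sum]
      exact Finset.sum_congr rfl fun i _ => by ring

lemma relationsTrivialModPow_of_one {φ : A →+* B} {p : ℕ}
    (hregB : ∀ x : B, (p : B) * x = 0 → x = 0)
    (h1 : RelationsTrivialModPow φ p 1) (n : ℕ) (hn : 1 ≤ n) : RelationsTrivialModPow φ p n := by
  induction n, hn using Nat.le_induction with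
  | base => exact h1
  | succ n _ ih => exact h1.succ hregB ih

/-- A maximal ideal of `A/pʳA` contains `p`, hence stays proper in `A/pA`, and faithful flatness
modulo `p` applies there. -/
lemma map_ne_top_of_faithfullyFlat_one (r : ℕ) (hr : 1 ≤ r)
    (h : @Module.FaithfullyFlat (A ⧸ Ideal.span {(p : A) ^ 1}) (B ⧸ Ideal.span {(p : B) ^ 1})
      _ _ (inducedQuotMap φ p 1).toModule)
    (m : Ideal (A ⧸ Ideal.span {(p : A) ^ r})) (hm : m.IsMaximal) :
    m.map (inducedQuotMap φ p r) ≠ ⊤ := by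
  intro htop
  have le : Ideal.span {(p : A) ^ r} ≤ Ideal.span {(p : A) ^ 1} :=
    Ideal.span_singleton_le_span_singleton.2 (pow_dvd_pow _ hr)
  let qA := Ideal.Quotient.factor le
  let qB := Ideal.Quotient.factor
    (Ideal.span_singleton_le_span_singleton.2 (pow_dvd_pow (p : B) hr))
  have comm : (inducedQuotMap φ p 1).comp qA = qB.comp (inducedQuotMap φ p r) :=
    Ideal.Quotient.ringHom_ext rfl
  have hp : (p : A ⧸ Ideal.span {(p : A) ^ r}) ∈ m := by
    refine hm.isPrime.mem_of_pow_mem r ?_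
    have : (p : A ⧸ Ideal.span {(p : A) ^ r}) ^ r = 0 := by
      have := Ideal.Quotient.eq_zero_iff_mem.2 (Ideal.mem_span_singleton_self ((p : A) ^ r))
      rwa [map_pow, map_natCast] at this
    rw [this]
    exact m.zero_mem
  have hker : RingHom.ker qA ≤ m := by
    intro t ht
    obtain ⟨t, rfl⟩ := Ideal.Quotient.mk_surjective t
    obtain ⟨c, rfl⟩ := Ideal.mem_span_singleton.1 (Ideal.Quotient.eq_zero_iff_mem.1 ht)
    simpa using m.mul_mem_right _ hp
  have hqA : m.map qA = ⊤ := by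
    let := (inducedQuotMap φ p 1).toAlgebra
    refine ((Module.FaithfullyFlat.iff_flat_and_ideal_smul_eq_top _ _).1 h).2 _ ?_
    rw [Ideal.smul_top_eq_map]
    have : (m.map qA).map (inducedQuotMap φ p 1) = ⊤ := by
      rw [Ideal.map_map, comm, ← Ideal.map_map, htop, Ideal.map_top]
    exact congrArg (Submodule.restrictScalars _) this
  have := Ideal.comap_map_of_surjective qA (Ideal.Quotient.factor_surjective le) m
  rw [hqA, Ideal.comap_top] at this
  refine hm.ne_top (top_le_iff.1 (this.le.trans (sup_le le_rfl hker)))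

end

/-- Let `φ : A → B` be a homomorphism of commutative rings in which `p` is a
non-zero-divisor. If `B/pB` is a (faithfully) flat `A/pA`-module, then `B/p^r B` is a
(faithfully) flat `A/p^r A`-module for every `r ≥ 1`. -/
theorem stmt_14 (p : ℕ) (hp : p.Prime) {A B : Type*} [CommRing A] [CommRing B] (φ : A →+* B)
    (hregA : ∀ x : A, (p : A) * x = 0 → x = 0)
    (hregB : ∀ x : B, (p : B) * x = 0 → x = 0) :
    ∀ r : ℕ, 1 ≤ r →
      ((@Module.Flat (A ⧸ Ideal.span {(p : A) ^ 1}) (B ⧸ Ideal.span {(p : B) ^ 1})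
          _ _ (inducedQuotMap φ p 1).toModule) →
        @Module.Flat (A ⧸ Ideal.span {(p : A) ^ r}) (B ⧸ Ideal.span {(p : B) ^ r})
          _ _ (inducedQuotMap φ p r).toModule) ∧
      ((@Module.FaithfullyFlat (A ⧸ Ideal.span {(p : A) ^ 1}) (B ⧸ Ideal.span {(p : B) ^ 1})
          _ _ (inducedQuotMap φ p 1).toModule) →
        @Module.FaithfullyFlat (A ⧸ Ideal.span {(p : A) ^ r}) (B ⧸ Ideal.span {(p : B) ^ r})
          _ _ (inducedQuotMap φ p r).toModule) := by
  intro r hr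
  have flat := fun h => flat_of_relationsTrivialModPow φ p r
    (relationsTrivialModPow_of_one hregB (relationsTrivialModPow_of_flat φ p 1 h) r hr)
  refine ⟨flat, fun h => ?_⟩
  let := (inducedQuotMap φ p r).toAlgebra
  refine (Module.faithfullyFlat_iff _ _).2 ⟨flat ?_, fun m hm htop => ?_⟩
  · letI := (inducedQuotMap φ p 1).toModule
    exact h.toFlat
  · refine map_ne_top_of_faithfullyFlat_one φ p r hr h m hm ?_
    rw [Ideal.smul_top_eq_map] at htop
    exact (Submodule.restrictScalars_eq_top_iff _ _ _).1 htop
end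

section
/- Let p be a prime and φ : A → B a homomorphism of commutative rings such that: p is a non-zero-divisor in A and in B; A and B are p-adically complete and separated; and the induced homomorphism A/p^r A → B/p^r B is faithfully flat for every r ≥ 1. Let M be a finitely generated A-module on which p is a non-zero-divisor and which is p-adically complete and separated. Let M̂_B := lim_r (B ⊗_A M)/p^r(B ⊗_A M) be the p-adic completion of B ⊗_A M. If M̂_B[1/p] := M̂_B ⊗_{ℤ} ℤ[1/p] is a finitely generated projective B[1/p]-module, then M[1/p] is a finitely generated projective A[1/p]-module, i.e. a direct summand of a finitely generated free A[1/p]-module. -/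
/-!
Choose a surjection `f : A^n → M` with kernel `K`. The module `M[1/p]` is projective as soon as
there are a `c` and a map `ρ : A^n → K` with `ρ = p^c` on `K`: then `p^c - ρ` factors through `M`
and, after inverting `p`, gives a section of `f` (`split_of_retraction`,
`projective_of_split_up_to_pow`).

Over `B`, projectivity of the localized completion yields such a map: with `g : B^n → M̂_B` the
surjection induced by `f`, clearing denominators in a section of `g[1/p]` gives
`h : B^n → ker g` equal to `p^c` on `ker g` (`split_up_to_pow`). Modulo `p^r`, the vectors `h(e_i)`
are `B`-combinations of finitely many vectors `w_j ∈ K`, by the equational criterion for the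
vanishing of elements of `B ⊗ M` (`relations_of_mem_pow_smul`).

The descent takes place modulo the single power `p^(2c+1)`. A finite linear system over `A/p^r`
which is solvable over the faithfully flat extension `B/p^r` is already solvable over `A/p^r`
(`linear_system_descent`). This is applied twice: it shows that `p^c K` lies in the span of the
`w_j` modulo `p^r`, and it produces an endomorphism `h'` of `A^n` with image in `K` and
`h' = p^c` on the `w_j` modulo `p^r`. Together these give `p^c h' = p^(2c)` on `K` modulo
`p^(2c+1)` (`descend_approx_retraction`), hence `h' = p^c (1 + p Y)` on `K` for an endomorphism `Y`
of `K`, since `p` is a non-zero-divisor on `A` and `M`. Finally, `K` is `p`-adically complete,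
being closed in `A^n`, so `1 + p Y` is invertible on `K`, and `h'` can be corrected to an exact
`ρ` (`exact_retraction`).
-/

open scoped TensorProduct

/-- If `f : B^n → P` is surjective and `P[1/q]` is projective, clearing denominators in a section of
`f[1/q]` gives `s : B^n → B^n` with `q^b f s = q^(b+a) f` and `s = 0` on `ker f`; then
`h = q^b (q^a - s)` maps into `ker f` and is multiplication by a power of `q` on `ker f`. -/
lemma split_up_to_pow {B P : Type*} [CommRing B] [AddCommGroup P] [Module B P] (q : B)
    (hq : ∀ x : B, q * x = 0 → x = 0) {n : ℕ} (f : (Fin n → B) →ₗ[B] P)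
    (hf : Function.Surjective f)
    [Module.Projective (Localization.Away q) (LocalizedModule (Submonoid.powers q) P)] :
    ∃ (c : ℕ) (h : (Fin n → B) →ₗ[B] (Fin n → B)),
      (∀ x, f (h x) = 0) ∧ ∀ x, f x = 0 → h x = q ^ c • x := by
  set S := Submonoid.powers q with hS
  obtain ⟨g, hg⟩ := Module.projective_lifting_property (LocalizedModule.map S f) LinearMap.id
    (LocalizedModule.map_surjective S f hf)
  have hg' : ∀ z, LocalizedModule.map S f (g z) = z := fun z => LinearMap.congr_fun hg z
  have hden : ∀ z : LocalizedModule S (Fin n → B), ∃ a₀ : ℕ, ∀ a, a₀ ≤ a →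
      ∃ v : Fin n → B, q ^ a • z = LocalizedModule.mkLinearMap S _ v := by
    intro z
    induction z using LocalizedModule.induction_on with
    | h v s =>
      obtain ⟨s, a₀, rfl⟩ := s
      refine ⟨a₀, fun a ha => ⟨q ^ (a - a₀) • v, ?_⟩⟩
      rw [LocalizedModule.mkLinearMap_apply, LocalizedModule.smul'_mk, LocalizedModule.mk_eq]
      refine ⟨1, ?_⟩
      simp only [one_smul, Submonoid.smul_def, smul_smul, ← pow_add]
      rw [Nat.add_sub_cancel' ha]
  have hinj : ∀ v w : Fin n → B, LocalizedModule.mkLinearMap S _ v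
      = LocalizedModule.mkLinearMap S _ w → v = w := by
    intro v w hvw
    rw [LocalizedModule.mkLinearMap_apply, LocalizedModule.mkLinearMap_apply,
      LocalizedModule.mk_eq] at hvw
    obtain ⟨⟨u, k, rfl⟩, hu⟩ := hvw
    simp only [one_smul, Submonoid.smul_def] at hu
    have key : ∀ (k : ℕ) (x : B), q ^ k * x = 0 → x = 0 := by
      intro k
      induction k with
      | zero => intro x hx; simpa using hx
      | succ k ih => intro x hx; exact ih x (hq _ (by rw [← hx]; ring))
    ext i
    have := congrFun hu i
    simp only [Pi.smul_apply, smul_eq_mul] at this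
    exact sub_eq_zero.mp (key k _ (by rw [mul_sub, this, sub_self]))
  have hcancel : ∀ v w : P, LocalizedModule.mkLinearMap S _ v
      = LocalizedModule.mkLinearMap S _ w → ∃ b₀ : ℕ, ∀ b, b₀ ≤ b → q ^ b • v = q ^ b • w := by
    intro v w hvw
    rw [LocalizedModule.mkLinearMap_apply, LocalizedModule.mkLinearMap_apply,
      LocalizedModule.mk_eq] at hvw
    obtain ⟨⟨u, k, rfl⟩, hu⟩ := hvw
    simp only [one_smul, Submonoid.smul_def] at hu
    refine ⟨k, fun b hb => ?_⟩
    rw [← Nat.sub_add_cancel hb, pow_add, mul_smul, mul_smul, hu]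
  let e : Fin n → (Fin n → B) := fun i => Pi.single i 1
  choose a₀ ha₀ using fun i => hden (g (LocalizedModule.mkLinearMap S _ (f (e i))))
  set a := Finset.univ.sup a₀
  choose v hv using fun i => ha₀ i a (Finset.le_sup (f := a₀) (Finset.mem_univ i))
  let s : (Fin n → B) →ₗ[B] (Fin n → B) := (Pi.basisFun B (Fin n)).constr B v
  have hse : ∀ i, s (e i) = v i := by
    intro i
    have := (Pi.basisFun B (Fin n)).constr_basis B v i
    simpa only [Pi.basisFun_apply] using this
  have hs : ∀ x, LocalizedModule.mkLinearMap S _ (s x)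
      = q ^ a • g (LocalizedModule.mkLinearMap S _ (f x)) := by
    have : (LocalizedModule.mkLinearMap S _) ∘ₗ s
        = q ^ a • ((g.restrictScalars B) ∘ₗ (LocalizedModule.mkLinearMap S _) ∘ₗ f) := by
      apply (Pi.basisFun B (Fin n)).ext
      intro i
      rw [Pi.basisFun_apply]
      change LocalizedModule.mkLinearMap S _ (s (e i))
        = q ^ a • g (LocalizedModule.mkLinearMap S _ (f (e i)))
      rw [hse, hv]
    exact fun x => LinearMap.congr_fun this x
  have hfs : ∀ x, LocalizedModule.mkLinearMap S _ (f (s x))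
      = LocalizedModule.mkLinearMap S _ (q ^ a • f x) := by
    intro x
    have h1 := congrArg (LocalizedModule.map S f) (hs x)
    have h2 : LocalizedModule.map S f (q ^ a • g (LocalizedModule.mkLinearMap S _ (f x)))
        = q ^ a • LocalizedModule.map S f (g (LocalizedModule.mkLinearMap S _ (f x))) :=
      LinearMap.map_smul_of_tower _ _ _
    rw [h2, hg', LocalizedModule.mkLinearMap_apply, LocalizedModule.map_mk] at h1
    rw [map_smul, ← h1, LocalizedModule.mkLinearMap_apply]
  choose b₀ hb₀ using fun i => hcancel _ _ (hfs (e i))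
  set b := Finset.univ.sup b₀
  have hb : ∀ x, q ^ b • f (s x) = q ^ b • (q ^ a • f x) := by
    have : q ^ b • (f ∘ₗ s) = q ^ b • (q ^ a • f) := by
      apply (Pi.basisFun B (Fin n)).ext
      intro i
      rw [Pi.basisFun_apply]
      exact hb₀ i b (Finset.le_sup (f := b₀) (Finset.mem_univ i))
    exact fun x => LinearMap.congr_fun this x
  refine ⟨b + a, q ^ b • (q ^ a • LinearMap.id - s), fun x => ?_, fun x hx => ?_⟩
  · simp only [LinearMap.smul_apply, LinearMap.sub_apply, LinearMap.id_apply, map_smul, map_sub,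
      smul_sub, hb, sub_self]
  · have : s x = 0 := by
      apply hinj
      rw [hs, hx]
      simp
    simp only [LinearMap.smul_apply, LinearMap.sub_apply, LinearMap.id_apply, this, sub_zero,
      smul_smul, pow_add]

lemma of_surjective_of_finite {B P : Type*} [CommRing B] [AddCommGroup P] [Module B P]
    (I : Ideal B) [IsAdicComplete I B] [Module.Finite B P] :
    Function.Surjective (AdicCompletion.of I P) := by
  intro y
  obtain ⟨t, rfl⟩ := AdicCompletion.ofTensorProduct_surjective_of_finite I P y
  induction t using TensorProduct.induction_on with
  | zero => exact ⟨0, by simp⟩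
  | tmul r m =>
    obtain ⟨r, rfl⟩ := AdicCompletion.of_surjective I B r
    refine ⟨r • m, ?_⟩
    rw [AdicCompletion.ofTensorProduct_tmul, map_smul]
    ext k
    simp only [AdicCompletion.smul_eval, AdicCompletion.val_smul_apply]
    rfl
  | add x y hx hy =>
    obtain ⟨a, ha⟩ := hx
    obtain ⟨b, hb⟩ := hy
    exact ⟨a + b, by rw [map_add, map_add, ha, hb]⟩

/-- A map from a finite free module to `M` that is split up to a power of `q` exhibits `M[1/q]` as a
direct summand of a free module. -/
lemma projective_of_split_up_to_pow {A M : Type*} [CommRing A] [AddCommGroup M] [Module A M]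
    (q : A) {n c : ℕ} (f : (Fin n → A) →ₗ[A] M) (s : M →ₗ[A] (Fin n → A))
    (h : ∀ m, f (s m) = q ^ c • m) :
    Module.Projective (Localization.Away q) (LocalizedModule (Submonoid.powers q) M) := by
  set S := Submonoid.powers q
  have key : ∀ z, LocalizedModule.map S f (LocalizedModule.map S s z)
      = algebraMap A (Localization S) (q ^ c) • z := by
    intro z
    induction z using LocalizedModule.induction_on with
    | h m t =>
      rw [LocalizedModule.map_mk, LocalizedModule.map_mk, h, algebraMap_smul,
        LocalizedModule.smul'_mk]
  have hu : IsUnit (algebraMap A (Localization S) (q ^ c)) :=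
    IsLocalization.map_units (Localization S) (⟨q ^ c, c, rfl⟩ : S)
  obtain ⟨u, hu⟩ := hu
  refine Module.Projective.of_split (M := LocalizedModule S (Fin n → A))
    (LocalizedModule.map S s) ((u⁻¹ : (Localization S)ˣ).1 • LocalizedModule.map S f) ?_
  ext1 z
  simp only [LinearMap.comp_apply, LinearMap.smul_apply, key, ← hu, LinearMap.id_apply, smul_smul,
    Units.inv_mul, one_smul]

/-- A finite system of linear equations over `S` that is solvable over a faithfully flat extension `T`
is solvable over `S`: the class of `v` in the cokernel `C` of the system vanishes in `T ⊗ C`, and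
`C → T ⊗ C` is injective. -/
lemma linear_system_descent {S T ι α : Type*} [CommRing S] [CommRing T] [Algebra S T]
    [Module.FaithfullyFlat S T] [Fintype ι] [Fintype α] (v : ι → S) (w : α → ι → S) (t : α → T)
    (h : ∀ i, algebraMap S T (v i) = ∑ j, t j * algebraMap S T (w j i)) :
    ∃ a : α → S, ∀ i, v i = ∑ j, a j * w j i := by
  classical
  set L := Submodule.span S (Set.range w)
  have expand : ∀ x : ι → S, (1 : T) ⊗ₜ[S] L.mkQ x
      = ∑ i, algebraMap S T (x i) ⊗ₜ[S] L.mkQ (Pi.single i 1) := by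
    intro x
    conv_lhs => rw [pi_eq_sum_univ' x]
    rw [map_sum, TensorProduct.tmul_sum]
    refine Finset.sum_congr rfl fun i _ => ?_
    rw [map_smul, ← TensorProduct.smul_tmul, Algebra.smul_def, mul_one]
  have hv : (1 : T) ⊗ₜ[S] L.mkQ v = 0 := by
    rw [expand]
    simp_rw [h, TensorProduct.sum_tmul]
    rw [Finset.sum_comm]
    refine Finset.sum_eq_zero fun j _ => ?_
    have : ∑ i, (t j * algebraMap S T (w j i)) ⊗ₜ[S] L.mkQ (Pi.single i 1)
        = t j • ((1 : T) ⊗ₜ[S] L.mkQ (w j)) := by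
      rw [expand, Finset.smul_sum]
      rfl
    have hw : L.mkQ (w j) = 0 :=
      (Submodule.Quotient.mk_eq_zero L).2 (Submodule.subset_span ⟨j, rfl⟩)
    rw [this, hw, TensorProduct.tmul_zero, smul_zero]
  have hv' : L.mkQ v = 0 :=
    Module.FaithfullyFlat.tensorProduct_mk_injective (A := S) (B := T) _ (by
      simpa using hv)
  rw [Submodule.mkQ_apply, Submodule.Quotient.mk_eq_zero] at hv'
  obtain ⟨a, ha⟩ := (Submodule.mem_span_range_iff_exists_fun S).1 hv'
  exact ⟨a, fun i => by simpa using (congrFun ha i).symm⟩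

/-- Suppose that over `T` the map `e_i ↦ ∑ j, b i j • w j` is multiplication by `q` on `K`, where the
finitely many vectors `w j` lie in `K`. Then over `S` there is a map `e_i ↦ ∑ j, g i j • w j` which
is multiplication by `q` on `K` up to a further factor `q`. The factor appears because the equations
are only imposed on the `w j`, whose span contains `q K` but possibly not `K`. -/
lemma descend_approx_retraction {S T κ : Type*} [CommRing S] [CommRing T] [Algebra S T]
    [Module.FaithfullyFlat S T] [Fintype κ] {n : ℕ} (K : Set (Fin n → S)) (q : S)
    (w : κ → Fin n → S) (hw : ∀ j, w j ∈ K) (b : Fin n → κ → T)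
    (h : ∀ y ∈ K, ∀ l, algebraMap S T (q * y l)
      = ∑ i, algebraMap S T (y i) * ∑ j, b i j * algebraMap S T (w j l)) :
    ∃ g : Fin n → κ → S, ∀ y ∈ K, ∀ l,
      q * ∑ i, y i * ∑ j, g i j * w j l = q * (q * y l) := by
  -- `q K` is contained in the span of the `w j`.
  have step1 : ∀ y ∈ K, ∃ a : κ → S, ∀ l, q * y l = ∑ j, a j * w j l := by
    intro y hy
    apply linear_system_descent (T := T) (fun l => q * y l) w
      (fun j => ∑ i, algebraMap S T (y i) * b i j)
    intro l
    rw [h y hy]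
    simp_rw [Finset.mul_sum, Finset.sum_mul, mul_assoc]
    exact Finset.sum_comm
  -- The unknowns are the coefficients of the images of the basis vectors with respect to the `w j`,
  -- and the equations say that the resulting map is multiplication by `q` on each `w j`.
  obtain ⟨a, ha⟩ := linear_system_descent (T := T) (ι := κ × Fin n) (α := Fin n × κ)
    (fun e => q * w e.1 e.2) (fun d e => w e.1 d.1 * w d.2 e.2) (fun d => b d.1 d.2) (by
      rintro ⟨j', l⟩
      dsimp only
      rw [h _ (hw j'), Fintype.sum_prod_type]
      refine Finset.sum_congr rfl fun i _ => ?_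
      rw [Finset.mul_sum]
      refine Finset.sum_congr rfl fun j _ => ?_
      rw [map_mul]
      ring)
  have ha' : ∀ j' l, ∑ i, w j' i * ∑ j, a (i, j) * w j l = q * w j' l := by
    intro j' l
    rw [ha (j', l), Fintype.sum_prod_type]
    refine Finset.sum_congr rfl fun i _ => ?_
    rw [Finset.mul_sum]
    refine Finset.sum_congr rfl fun j _ => ?_
    ring
  refine ⟨fun i j => a (i, j), fun y hy l => ?_⟩
  obtain ⟨d, hd⟩ := step1 y hy
  calc q * ∑ i, y i * ∑ j, a (i, j) * w j l
      = ∑ i, (q * y i) * ∑ j, a (i, j) * w j l := by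
        rw [Finset.mul_sum]
        exact Finset.sum_congr rfl fun i _ => by ring
    _ = ∑ j', d j' * ∑ i, w j' i * ∑ j, a (i, j) * w j l := by
        have key : ∀ X : Fin n → S, ∑ i, (∑ j', d j' * w j' i) * X i
            = ∑ j', d j' * ∑ i, w j' i * X i := by
          intro X
          simp_rw [Finset.sum_mul, Finset.mul_sum, mul_assoc]
          exact Finset.sum_comm
        simp_rw [hd]
        exact key _
    _ = q * (q * y l) := by
        rw [hd, Finset.mul_sum]
        simp_rw [ha']
        exact Finset.sum_congr rfl fun i _ => by ring

lemma exists_eq_sum_tmul {A B M : Type*} [CommRing A] [CommRing B] [Algebra A B]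
    [AddCommGroup M] [Module A M] {n : ℕ} (m : Fin n → M)
    (hm : Submodule.span A (Set.range m) = ⊤) (t : B ⊗[A] M) :
    ∃ z : Fin n → B, t = ∑ i, z i ⊗ₜ[A] m i := by
  induction t using TensorProduct.induction_on with
  | zero => exact ⟨0, by simp⟩
  | tmul β μ =>
    obtain ⟨a, rfl⟩ := (Submodule.mem_span_range_iff_exists_fun A).1
      (show μ ∈ Submodule.span A (Set.range m) from hm ▸ Submodule.mem_top)
    refine ⟨fun i => a i • β, ?_⟩
    rw [TensorProduct.tmul_sum]
    exact Finset.sum_congr rfl fun i _ => by rw [TensorProduct.tmul_smul, TensorProduct.smul_tmul']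
  | add s t hs ht =>
    obtain ⟨z, rfl⟩ := hs
    obtain ⟨z', rfl⟩ := ht
    exact ⟨z + z', by simp [TensorProduct.add_tmul, Finset.sum_add_distrib]⟩

/-- If `∑ x_i ⊗ m_i` is divisible by `q^r` in `B ⊗ M`, then modulo `q^r` the vector `x` is a
`B`-combination of finitely many `A`-linear relations between the generators `m_i`. -/
lemma relations_of_mem_pow_smul {A B M : Type*} [CommRing A] [CommRing B] [Algebra A B]
    [AddCommGroup M] [Module A M] (q : B) {n : ℕ} (m : Fin n → M)
    (hm : Submodule.span A (Set.range m) = ⊤) (r : ℕ) (x : Fin n → B)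
    (hx : ∑ i, x i ⊗ₜ[A] m i ∈ (Ideal.span {q} ^ r • ⊤ : Submodule B (B ⊗[A] M))) :
    ∃ (k : ℕ) (w : Fin k → Fin n → A) (b : Fin k → B) (z : Fin n → B),
      (∀ j, ∑ i, w j i • m i = 0) ∧
      ∀ i, x i = ∑ j, b j * algebraMap A B (w j i) + q ^ r * z i := by
  rw [Ideal.span_singleton_pow, Submodule.ideal_span_singleton_smul,
    Submodule.mem_smul_pointwise_iff_exists] at hx
  obtain ⟨t, -, ht⟩ := hx
  obtain ⟨z, rfl⟩ := exists_eq_sum_tmul m hm t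
  have h0 : ∑ i, m i ⊗ₜ[A] (x i - q ^ r * z i) = (0 : M ⊗[A] B) := by
    have h1 : ∑ i, (x i - q ^ r * z i) ⊗ₜ[A] m i = (0 : B ⊗[A] M) := by
      simp_rw [TensorProduct.sub_tmul]
      rw [Finset.sum_sub_distrib, ← ht, Finset.smul_sum]
      exact sub_self _
    simpa using congrArg (TensorProduct.comm A B M) h1
  obtain ⟨k, a, b, hab, ha⟩ := TensorProduct.vanishesTrivially_of_sum_tmul_eq_zero A hm h0
  refine ⟨k, fun j i => a i j, b, z, ha, fun i => ?_⟩
  rw [eq_add_of_sub_eq (hab i)]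
  simp_rw [Algebra.smul_def, mul_comm (b _)]

/-- In a `q`-adically complete ring the series `∑ q^k a_k` converges. -/
lemma exists_series_sum {A : Type*} [CommRing A] (q : A) [IsAdicComplete (Ideal.span {q}) A]
    (a : ℕ → A) : ∃ L, ∀ N, ∃ z, L = ∑ k ∈ Finset.range N, q ^ k * a k + q ^ N * z := by
  have mem : ∀ N (x y : A), x ≡ y [SMOD (Ideal.span {q} ^ N • ⊤ : Submodule A A)] ↔
      q ^ N ∣ x - y := by
    intro N x y
    rw [SModEq.sub_mem, Ideal.span_singleton_pow, smul_eq_mul, Ideal.mul_top,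
      Ideal.mem_span_singleton]
  obtain ⟨L, hL⟩ := IsPrecomplete.prec (I := Ideal.span {q}) inferInstance
    (f := fun N => ∑ k ∈ Finset.range N, q ^ k * a k) (by
      intro m n hmn
      rw [SModEq.comm, mem, ← Finset.sum_range_add_sum_Ico _ hmn, add_sub_cancel_left]
      exact Finset.dvd_sum fun k hk =>
        (pow_dvd_pow q (Finset.mem_Ico.1 hk).1).mul_right _)
  refine ⟨L, fun N => ?_⟩
  obtain ⟨z, hz⟩ := (mem _ _ _).1 (hL N).symm
  exact ⟨z, by rw [← hz]; ring⟩

lemma eq_zero_of_forall_pow_smul {A M : Type*} [CommRing A] [AddCommGroup M] [Module A M]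
    (q : A) [IsHausdorff (Ideal.span {q}) M] (x : M) (h : ∀ N : ℕ, ∃ z, x = q ^ N • z) :
    x = 0 := by
  refine IsHausdorff.haus (I := Ideal.span {q}) inferInstance x fun N => ?_
  obtain ⟨z, rfl⟩ := h N
  rw [SModEq.zero]
  exact Submodule.smul_mem_smul (Ideal.pow_mem_pow (Ideal.mem_span_singleton_self q) N) trivial

/-- If `h` maps into `ker f` and is congruent to `q^c` on `ker f` modulo `q^(c+1)`, then some
`ρ` maps into `ker f` and equals `q^c` on `ker f`. Indeed `h = q^c (1 + q ψ)` on `ker f`, and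
`1 + q ψ` is bijective there by a geometric series argument; `ρ` is `h` followed by its inverse. -/
lemma exact_retraction {A M : Type*} [CommRing A] [AddCommGroup M] [Module A M] (q : A)
    (hqA : ∀ x : A, q * x = 0 → x = 0) (hqM : ∀ x : M, q • x = 0 → x = 0)
    [IsAdicComplete (Ideal.span {q}) A] [IsHausdorff (Ideal.span {q}) M]
    {n : ℕ} (f : (Fin n → A) →ₗ[A] M) (h : (Fin n → A) →ₗ[A] (Fin n → A)) (c : ℕ)
    (hfh : ∀ x, f (h x) = 0)
    (hh : ∀ y, f y = 0 → ∃ z, h y = q ^ c • y + q ^ (c + 1) • z) :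
    ∃ ρ : (Fin n → A) →ₗ[A] (Fin n → A),
      (∀ x, f (ρ x) = 0) ∧ ∀ y, f y = 0 → ρ y = q ^ c • y := by
  have hqM' : ∀ (k : ℕ) (x : M), q ^ k • x = 0 → x = 0 := by
    intro k
    induction k with
    | zero => intro x hx; simpa using hx
    | succ k ih => intro x hx; exact ih x (hqM _ (by rw [smul_smul, ← pow_succ', hx]))
  have hqF : ∀ (k : ℕ) (x : Fin n → A), q ^ k • x = 0 → x = 0 := by
    intro k
    induction k with
    | zero => intro x hx; simpa using hx
    | succ k ih =>
      intro x hx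
      refine ih x (funext fun i => hqA _ ?_)
      have := congrFun hx i
      simp only [Pi.smul_apply, smul_eq_mul, Pi.zero_apply] at this ⊢
      rw [← mul_assoc, ← pow_succ', this]
  have hsep : ∀ x : Fin n → A, (∀ N : ℕ, ∃ z, x = q ^ N • z) → x = 0 := by
    intro x hx
    funext i
    refine eq_zero_of_forall_pow_smul q (x i) fun N => ?_
    obtain ⟨z, rfl⟩ := hx N
    exact ⟨z i, rfl⟩
  -- The error term `z` lies in `ker f` because `M` has no `q`-torsion.
  have hh' : ∀ y, f y = 0 → ∃ z, f z = 0 ∧ h y = q ^ c • y + q ^ (c + 1) • z := by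
    intro y hy
    obtain ⟨z, hz⟩ := hh y hy
    refine ⟨z, hqM' (c + 1) _ ?_, hz⟩
    have := hfh y
    rwa [hz, map_add, map_smul, map_smul, hy, smul_zero, zero_add] at this
  have uniq : ∀ x, f x = 0 → h x = 0 → x = 0 := by
    intro x hx hx0
    apply hsep
    intro N
    suffices ∃ z, f z = 0 ∧ h z = 0 ∧ x = q ^ N • z from
      let ⟨z, _, _, hz⟩ := this; ⟨z, hz⟩
    induction N with
    | zero => exact ⟨x, hx, hx0, by simp⟩
    | succ N ih =>
      obtain ⟨z, hz, hz0, rfl⟩ := ih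
      obtain ⟨u, hu, hzu⟩ := hh' z hz
      have hzu' : z = q • (-u) := by
        have : q ^ c • (z + q • u) = 0 := by
          rw [smul_add, smul_smul, ← pow_succ, ← hzu, hz0]
        rw [smul_neg]
        exact eq_neg_of_add_eq_zero_left (hqF c _ this)
      refine ⟨-u, by rw [map_neg, hu, neg_zero], hqF 1 _ ?_, ?_⟩
      · rw [pow_one, ← map_smul, ← hzu', hz0]
      · rw [pow_succ, mul_smul, ← hzu']
  have exist : ∀ y, f y = 0 → ∃ x, f x = 0 ∧ h x = q ^ c • y := by
    intro y hy
    -- The solution is `x = ∑ q^k (-ψ)^k y`. It lies in `ker f` because `M` is `q`-adically separated.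
    choose! ψ hψ0 hψ using hh'
    let s : ℕ → Fin n → A := fun N => (fun u => -ψ u)^[N] y
    have hs_succ : ∀ N, s (N + 1) = -ψ (s N) := fun N => Function.iterate_succ_apply' _ _ _
    have hs : ∀ N, f (s N) = 0 := by
      intro N
      induction N with
      | zero => exact hy
      | succ N ih => rw [hs_succ, map_neg, hψ0 _ ih, neg_zero]
    choose L Z hLZ using fun i => exists_series_sum q (fun k => s k i)
    have hL : ∀ N, L = ∑ k ∈ Finset.range N, q ^ k • s k + q ^ N • fun i => Z i N := by
      intro N
      funext i
      rw [hLZ i N]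
      simp [Finset.sum_apply]
    refine ⟨L, eq_zero_of_forall_pow_smul q _ fun N => ⟨f fun i => Z i N, ?_⟩,
      sub_eq_zero.1 (hsep _ fun N => ⟨h (fun i => Z i N) - q ^ c • s N, ?_⟩)⟩
    · conv_lhs => rw [hL N]
      rw [map_add, map_sum, map_smul, Finset.sum_eq_zero, zero_add]
      intro k _
      rw [map_smul, hs, smul_zero]
    · have tele : ∀ N, h (∑ k ∈ Finset.range N, q ^ k • s k)
          = q ^ c • y - q ^ N • q ^ c • s N := by
        intro N
        induction N with
        | zero => simp [s]
        | succ N ih =>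
          rw [Finset.sum_range_succ, map_add, ih, map_smul, hψ _ (hs N), hs_succ]
          module
      conv_lhs => rw [hL N]
      rw [map_add, tele, map_smul]
      module
  -- It suffices to solve `h (ρ e_i) = q^c • h e_i` on basis vectors; uniqueness then forces
  -- `ρ = q^c` on `ker f`.
  choose x hx0 hx using fun i => exist (h (Pi.single i 1)) (hfh _)
  let ρ : (Fin n → A) →ₗ[A] (Fin n → A) := (Pi.basisFun A (Fin n)).constr A x
  have hρ : ∀ i, ρ (Pi.single i 1) = x i := by
    intro i
    have := (Pi.basisFun A (Fin n)).constr_basis A x i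
    simpa only [Pi.basisFun_apply] using this
  have h1 : f ∘ₗ ρ = 0 := by
    apply (Pi.basisFun A (Fin n)).ext
    intro i
    rw [Pi.basisFun_apply, LinearMap.comp_apply, hρ, hx0, LinearMap.zero_apply]
  have h2 : h ∘ₗ ρ = q ^ c • h := by
    apply (Pi.basisFun A (Fin n)).ext
    intro i
    rw [Pi.basisFun_apply, LinearMap.comp_apply, hρ, hx, LinearMap.smul_apply]
  refine ⟨ρ, fun v => LinearMap.congr_fun h1 v, fun y hy => ?_⟩
  refine sub_eq_zero.1 (uniq _ ?_ ?_)
  · rw [map_sub, map_smul, hy, smul_zero, sub_zero]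
    exact LinearMap.congr_fun h1 y
  · rw [map_sub, map_smul, sub_eq_zero]
    exact LinearMap.congr_fun h2 y

lemma split_of_retraction {A M : Type*} [CommRing A] [AddCommGroup M] [Module A M] (q : A)
    {n : ℕ} (f : (Fin n → A) →ₗ[A] M) (hf : Function.Surjective f) (c : ℕ)
    (ρ : (Fin n → A) →ₗ[A] (Fin n → A))
    (hfρ : ∀ x, f (ρ x) = 0) (hρ : ∀ y, f y = 0 → ρ y = q ^ c • y) :
    ∃ s : M →ₗ[A] (Fin n → A), ∀ m, f (s m) = q ^ c • m := by
  let t : (Fin n → A) →ₗ[A] (Fin n → A) := q ^ c • LinearMap.id - ρ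
  refine ⟨(LinearMap.ker f).liftQ t (fun y hy => ?_) ∘ₗ
    (f.quotKerEquivOfSurjective hf).symm.toLinearMap, fun m => ?_⟩
  · simp [t, hρ y hy]
  · obtain ⟨v, rfl⟩ := hf m
    have : (f.quotKerEquivOfSurjective hf).symm (f v) = (LinearMap.ker f).mkQ v := by
      rw [LinearEquiv.symm_apply_eq]
      rfl
    rw [LinearMap.comp_apply, LinearEquiv.coe_coe, this, Submodule.mkQ_apply,
      Submodule.liftQ_apply]
    simp [t, hfρ]

/-- Let `φ : A → B` be a homomorphism of `p`-adically complete and separated rings (with `p`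
a non-zero-divisor in each) which is faithfully flat modulo every power of `p`. Let `M` be a
finitely generated `A`-module on which `p` is a non-zero-divisor and which is `p`-adically
complete and separated. If the `p`-adic completion `M̂_B` of `B ⊗_A M` becomes a finitely
generated projective module over `B[1/p]` after inverting `p`, then `M[1/p]` is a finitely
generated projective `A[1/p]`-module. -/
theorem stmt_15 (p : ℕ) (hp : p.Prime) {A B : Type*} [CommRing A] [CommRing B] [Algebra A B]
    (hregA : ∀ x : A, (p : A) * x = 0 → x = 0)
    (hregB : ∀ x : B, (p : B) * x = 0 → x = 0)
    (hcA : IsAdicComplete (Ideal.span {(p : A)}) A)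
    (hcB : IsAdicComplete (Ideal.span {(p : B)}) B)
    (hff : ∀ r : ℕ, 1 ≤ r →
      @Module.FaithfullyFlat (A ⧸ Ideal.span {(p : A) ^ r}) (B ⧸ Ideal.span {(p : B) ^ r})
        _ _ (inducedQuotMap (algebraMap A B) p r).toModule)
    (M : Type*) [AddCommGroup M] [Module A M] [Module.Finite A M]
    (hregM : ∀ x : M, (p : A) • x = 0 → x = 0)
    (hcM : IsAdicComplete (Ideal.span {(p : A)}) M)
    (hfin : Module.Finite (Localization.Away (p : B))
      (LocalizedModule (Submonoid.powers (p : B))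
        (AdicCompletion (Ideal.span {(p : B)}) (B ⊗[A] M))))
    (hproj : Module.Projective (Localization.Away (p : B))
      (LocalizedModule (Submonoid.powers (p : B))
        (AdicCompletion (Ideal.span {(p : B)}) (B ⊗[A] M)))) :
    Module.Finite (Localization.Away (p : A))
      (LocalizedModule (Submonoid.powers (p : A)) M) ∧
    Module.Projective (Localization.Away (p : A))
      (LocalizedModule (Submonoid.powers (p : A)) M) := by
  have := hcA
  have := hcB
  have := hcM
  refine ⟨inferInstance, ?_⟩
  obtain ⟨n, f, hf⟩ := Module.Finite.exists_fin' A M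
  let m : Fin n → M := fun i => f (Pi.single i 1)
  have hfm : ∀ y, f y = ∑ i, y i • m i := fun y => by
    conv_lhs => rw [pi_eq_sum_univ' y]
    rw [map_sum]
    exact Finset.sum_congr rfl fun i _ => map_smul _ _ _
  have hm : Submodule.span A (Set.range m) = ⊤ := by
    rw [eq_top_iff]
    intro μ _
    obtain ⟨y, rfl⟩ := hf μ
    exact (Submodule.mem_span_range_iff_exists_fun A).2 ⟨y, (hfm y).symm⟩
  let g₀ : (Fin n → B) →ₗ[B] B ⊗[A] M := Fintype.linearCombination B fun i => 1 ⊗ₜ[A] m i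
  have hg₀ : ∀ x, g₀ x = ∑ i, x i ⊗ₜ[A] m i := fun x => by
    simp [g₀, Fintype.linearCombination_apply, TensorProduct.smul_tmul']
  let g := AdicCompletion.of (Ideal.span {(p : B)}) (B ⊗[A] M) ∘ₗ g₀
  have hg : Function.Surjective g := by
    refine (of_surjective_of_finite _).comp fun t => ?_
    obtain ⟨z, rfl⟩ := exists_eq_sum_tmul m hm t
    exact ⟨z, hg₀ z⟩
  obtain ⟨c, h, hgh, hh⟩ := split_up_to_pow (p : B) hregB g hg
  -- The descended identity carries an extra factor `p ^ c`; with precision `p ^ (2 * c + 1)`,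
  -- cancelling it leaves a congruence modulo `p ^ (c + 1)`.
  have hx : ∀ i, ∃ (k : ℕ) (w : Fin k → Fin n → A) (b : Fin k → B) (z : Fin n → B),
      (∀ j, ∑ l, w j l • m l = 0) ∧ ∀ l, h (Pi.single i 1) l
        = ∑ j, b j * algebraMap A B (w j l) + (p : B) ^ (2 * c + 1) * z l := by
    intro i
    apply relations_of_mem_pow_smul _ m hm
    have h1 := congrArg (AdicCompletion.eval _ _ (2 * c + 1)) (hgh (Pi.single i 1))
    rw [map_zero, LinearMap.comp_apply, AdicCompletion.eval_of, Submodule.mkQ_apply,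
      Submodule.Quotient.mk_eq_zero, hg₀] at h1
    exact h1
  choose k w b z hw hx using hx
  let S := A ⧸ Ideal.span {(p : A) ^ (2 * c + 1)}
  let T := B ⧸ Ideal.span {(p : B) ^ (2 * c + 1)}
  let : Algebra S T := (inducedQuotMap (algebraMap A B) p (2 * c + 1)).toAlgebra
  have : Module.FaithfullyFlat S T := hff (2 * c + 1) (by omega)
  let mkA : A →+* S := Ideal.Quotient.mk _
  let mkB : B →+* T := Ideal.Quotient.mk _
  have hST : ∀ a, algebraMap S T (mkA a) = mkB (algebraMap A B a) := fun a => rfl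
  have hmkB : mkB ((p : B) ^ (2 * c + 1)) = 0 :=
    Ideal.Quotient.eq_zero_iff_mem.2 (Ideal.mem_span_singleton_self _)
  obtain ⟨a, ha⟩ := descend_approx_retraction (S := S) (T := T) (κ := Σ i, Fin (k i))
    {y | ∃ y₀ : Fin n → A, f y₀ = 0 ∧ ∀ l, y l = mkA (y₀ l)} (mkA ((p : A) ^ c))
    (fun j l => mkA (w j.1 j.2 l))
    (fun j => ⟨w j.1 j.2, by rw [hfm, hw], fun l => rfl⟩)
    (fun i j => if j.1 = i then mkB (b j.1 j.2) else 0) (by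
      rintro y ⟨y₀, hy₀, hy⟩ l
      have h1 : g (fun i => algebraMap A B (y₀ i)) = 0 := by
        have : g₀ (fun i => algebraMap A B (y₀ i)) = 1 ⊗ₜ[A] f y₀ := by
          rw [hg₀, hfm, TensorProduct.tmul_sum]
          refine Finset.sum_congr rfl fun i _ => ?_
          rw [TensorProduct.tmul_smul, TensorProduct.smul_tmul', Algebra.smul_def, mul_one]
        rw [LinearMap.comp_apply, this, hy₀, TensorProduct.tmul_zero, map_zero]
      have h2 := congrFun (hh _ h1) l
      rw [LinearMap.pi_apply_eq_sum_univ h] at h2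
      simp only [Finset.sum_apply, Pi.smul_apply, smul_eq_mul] at h2
      have h3 : ∀ i, mkB (h (Pi.single i 1) l) = ∑ j : Σ i, Fin (k i),
          (if j.1 = i then mkB (b j.1 j.2) else 0) * algebraMap S T (mkA (w j.1 j.2 l)) := by
        intro i
        rw [hx, map_add, map_mul mkB (_ ^ _), hmkB, zero_mul, add_zero, map_sum,
          Fintype.sum_sigma, Finset.sum_eq_single i]
        · exact Finset.sum_congr rfl fun j _ => by simp [hST]
        · intro i' _ hi'
          simp [hi']
        · simp
      simp_rw [← h3, hy, ← map_mul mkA, hST, ← map_mul mkB, ← map_sum mkB]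
      congr 1
      rw [map_mul, map_pow, map_natCast, ← h2]
      refine Finset.sum_congr rfl fun i _ => ?_
      have h4 : (fun j => if i = j then (1 : B) else 0) = Pi.single i 1 := by
        ext j
        simp [Pi.single_apply, eq_comm]
      rw [h4])
  choose a' ha' using fun i j => Ideal.Quotient.mk_surjective (a i j)
  let h' : (Fin n → A) →ₗ[A] (Fin n → A) :=
    (Pi.basisFun A (Fin n)).constr A fun i => ∑ j : Σ i, Fin (k i), a' i j • w j.1 j.2
  have hh' : ∀ y, h' y = ∑ i, y i • ∑ j : Σ i, Fin (k i), a' i j • w j.1 j.2 := fun y => by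
    simp [h', Module.Basis.constr_apply_fintype]
  have hpow : ∀ (k : ℕ) (x : A), (p : A) ^ k * x = 0 → x = 0 := by
    intro k
    induction k with
    | zero => intro x hx; simpa using hx
    | succ k ih => intro x hx; exact ih x (hregA _ (by rw [← mul_assoc, ← pow_succ', hx]))
  obtain ⟨ρ, hρ0, hρ⟩ := exact_retraction (p : A) hregA hregM f h' c
    (fun y => by
      rw [hh', map_sum]
      refine Finset.sum_eq_zero fun i _ => ?_
      rw [map_smul, map_sum, Finset.sum_eq_zero, smul_zero]
      intro j _
      rw [map_smul, hfm, hw, smul_zero])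
    (fun y hy => by
      have h1 : ∀ l, ∃ u, h' y l = (p : A) ^ c * y l + (p : A) ^ (c + 1) * u := by
        intro l
        have h2 := ha (fun l => mkA (y l)) ⟨y, hy, fun l => rfl⟩ l
        have h3 : mkA ((p : A) ^ c * h' y l) = mkA ((p : A) ^ c * ((p : A) ^ c * y l)) := by
          rw [map_mul, map_mul, map_mul, ← h2, hh']
          simp only [Finset.sum_apply, Pi.smul_apply, smul_eq_mul, map_sum, map_mul]
          simp only [mkA, ha']
        rw [Ideal.Quotient.eq, Ideal.mem_span_singleton] at h3
        obtain ⟨u, hu⟩ := h3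
        refine ⟨u, sub_eq_zero.1 (hpow c _ ?_)⟩
        rw [mul_sub, mul_add, ← mul_assoc _ (_ ^ (c + 1)), ← pow_add,
          show c + (c + 1) = 2 * c + 1 by ring, ← hu]
        ring
      choose u hu using h1
      exact ⟨u, funext hu⟩)
  obtain ⟨s, hs⟩ := split_of_retraction (p : A) f hf c ρ hρ0 hρ
  exact projective_of_split_up_to_pow (p : A) f s hs
end
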